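/- arXiv:2011.00374 — 3 statements merged into one kernel-verified Lean document; each statement's English description precedes it below -/
import Mathlib

section
/- There exists a universal constant C > 0 such that for every zero-mean Gaussian random vector Y = (Y_1, ..., Y_d) in R^d with σ_j² := E[Y_j²] > 0 for all 1 ≤ j ≤ d, and for every ε > 0, sup_{r ∈ R} P(|max_{1≤j≤d} Y_j − r| ≤ ε) ≤ C · ε · (σ̄/σ̲²) · sqrt(ln⁺(σ̲ d / ε)), where σ̲ := min_{1≤j≤d} σ_j, σ̄ := max_{1≤j≤d} σ_j, and ln⁺(x) := max(1, ln x). -/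
open MeasureTheory ProbabilityTheory Real

/-!
The bound follows from Nazarov's inequality, which is proved here by Gaussian integration by parts.

Put `X_j = Y_j / σ_j`, `a_j = (r - ε) / σ_j` and `h = 2 ε / σ̲`. If the maximum of `Y` is within `ε`
of `r`, then `max_j (X_j - a_j)` lies in `[0, h]`, so it suffices to bound the probability of the
latter event by a constant times `h √(max 1 (log d))` (`measureReal_slab_le`).

Let `J` be the index maximising `X_j - a_j`, and let `g` be a smooth nondecreasing function with
values in `[0, 2πh]` and `g' ≥ 1` on `[0, h]`. The crux is the inequality
`E [g'(X_J - a_J)] ≤ E [X_J g(X_J - a_J)]`. Fix `j` and write `X_i = Z_i + c_i X_j` with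
`c_i = Cov(X_i, X_j) ≤ 1`, where `Z` is independent of `X_j`. Given `Z`, the event `J = j` says that
`X_j` belongs to an upper set, because `x ↦ (1 - c_i) x` is nondecreasing; this is where the
normalisation to unit variances is used. On an upper set, integration by parts against the standard
Gaussian density leaves a nonnegative boundary term (`setIntegral_steinDefect_nonneg`).
Summing over `j` gives the inequality
(`setIntegral_isWinner_steinDefect_nonneg` is the contribution of one `j`).

The left side is at least the probability of the event, and the right side is at most `2πh` times
the expectation of an upper bound of `max_j X_j`, which an exponential moment estimate bounds by
`2 √(2 max 1 (log d))`.
-/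

/-! ### A smooth ramp and one-dimensional integration by parts -/

/-- A smooth nondecreasing function with values in `[0, 2πh]` whose slope is at least `1` on
`[0, h]`. It replaces the truncation `u ↦ min (max u 0) h`, whose corners would make integration by
parts awkward. -/
noncomputable def ramp (h u : ℝ) : ℝ := 2 * h * (π / 2 + arctan (u / h))

/-- The derivative of `ramp h`, for `0 < h`. -/
noncomputable def rampDeriv (h u : ℝ) : ℝ := 2 / (1 + (u / h) ^ 2)

lemma ramp_nonneg {h : ℝ} (hh : 0 < h) (u : ℝ) : 0 ≤ ramp h u := by
  have := neg_pi_div_two_lt_arctan (u / h)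
  unfold ramp
  have : 0 ≤ π / 2 + arctan (u / h) := by linarith
  positivity

lemma ramp_le {h : ℝ} (hh : 0 < h) (u : ℝ) : ramp h u ≤ 2 * π * h := by
  have := arctan_lt_pi_div_two (u / h)
  unfold ramp
  nlinarith

lemma hasDerivAt_ramp {h : ℝ} (hh : 0 < h) (u : ℝ) :
    HasDerivAt (ramp h) (rampDeriv h u) u := by
  have h1 : HasDerivAt (fun u : ℝ => u / h) (1 / h) u := (hasDerivAt_id u).div_const h
  refine ((h1.arctan.const_add (π / 2)).const_mul (2 * h)).congr_deriv ?_
  unfold rampDeriv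
  field_simp

lemma rampDeriv_nonneg (h u : ℝ) : 0 ≤ rampDeriv h u := by unfold rampDeriv; positivity

lemma rampDeriv_le (h u : ℝ) : rampDeriv h u ≤ 2 := by
  unfold rampDeriv
  rw [div_le_iff₀ (by positivity)]
  nlinarith [sq_nonneg (u / h)]

lemma one_le_rampDeriv {h u : ℝ} (hh : 0 < h) (h0 : 0 ≤ u) (h1 : u ≤ h) :
    1 ≤ rampDeriv h u := by
  unfold rampDeriv
  have h2 : u / h ≤ 1 := (div_le_one hh).2 h1
  have h3 : 0 ≤ u / h := by positivity
  rw [le_div_iff₀ (by positivity)]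
  nlinarith

@[fun_prop]
lemma measurable_ramp (h : ℝ) : Measurable (ramp h) := by
  unfold ramp; fun_prop

@[fun_prop]
lemma measurable_rampDeriv (h : ℝ) : Measurable (rampDeriv h) := by
  unfold rampDeriv; fun_prop

/-- The difference `x g(x - a) - g'(x - a)` for the ramp `g = ramp h`; Stein's identity says that its
standard Gaussian integral vanishes. -/
noncomputable def steinDefect (a h x : ℝ) : ℝ := x * ramp h (x - a) - rampDeriv h (x - a)

@[fun_prop]
lemma measurable_steinDefect (a h : ℝ) : Measurable (steinDefect a h) := by
  unfold steinDefect; fun_prop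

lemma abs_steinDefect_le {h : ℝ} (hh : 0 < h) (a x : ℝ) :
    |steinDefect a h x| ≤ 2 * π * h * |x| + 2 := by
  have h1 := ramp_nonneg hh (x - a)
  have h2 := ramp_le hh (x - a)
  have h3 := rampDeriv_nonneg h (x - a)
  have h4 := rampDeriv_le h (x - a)
  unfold steinDefect
  calc _ ≤ |x * ramp h (x - a)| + |rampDeriv h (x - a)| := abs_sub _ _
    _ = |x| * ramp h (x - a) + rampDeriv h (x - a) := by
      rw [abs_mul, abs_of_nonneg h1, abs_of_nonneg h3]
    _ ≤ _ := by nlinarith [abs_nonneg x]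

lemma integrable_steinDefect {h : ℝ} (hh : 0 < h) (a : ℝ) :
    Integrable (steinDefect a h) (gaussianReal 0 1) := by
  have hid : Integrable (fun x : ℝ => x) (gaussianReal 0 1) :=
    memLp_one_iff_integrable.1 (memLp_id_gaussianReal 1)
  refine ((hid.abs.const_mul (2 * π * h)).add (integrable_const 2)).mono'
    (by fun_prop) (ae_of_all _ fun x => abs_steinDefect_le hh a x)

/-- The Gaussian weight makes the Stein defect an exact derivative, since `φ' = -x φ`. -/
lemma hasDerivAt_neg_ramp_mul_pdf {h : ℝ} (hh : 0 < h) (a x : ℝ) :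
    HasDerivAt (fun x => -(ramp h (x - a) * gaussianPDFReal 0 1 x))
      (gaussianPDFReal 0 1 x • steinDefect a h x) x := by
  have h1 : HasDerivAt (fun x => ramp h (x - a)) (rampDeriv h (x - a)) x := by
    exact (hasDerivAt_ramp hh (x - a)).comp_sub_const x a
  have h2 : HasDerivAt (gaussianPDFReal 0 1) (gaussianPDFReal 0 1 x * (-x)) x := by
    unfold gaussianPDFReal
    have h3 : HasDerivAt (fun x : ℝ => -(x - 0) ^ 2 / (2 * ((1 : NNReal) : ℝ))) (-x) x := by
      refine ((((hasDerivAt_id x).sub_const 0).pow 2).neg.div_const _).congr_deriv ?_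
      simp
      ring
    refine (h3.exp.const_mul _).congr_deriv ?_
    ring
  refine (h1.mul h2).neg.congr_deriv ?_
  simp only [steinDefect, smul_eq_mul]
  ring

lemma tendsto_pdf_zero {l : Filter ℝ} (hl : l ≤ Filter.cocompact ℝ) :
    Filter.Tendsto (gaussianPDFReal 0 1) l (nhds 0) := by
  have h := (tendsto_rpow_abs_mul_exp_neg_mul_sq_cocompact (a := 1 / 2) (by norm_num) 0).const_mul
    ((√(2 * π * ((1 : NNReal) : ℝ)))⁻¹)
  rw [mul_zero] at h
  refine (h.mono_left hl).congr fun x => ?_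
  simp [gaussianPDFReal]
  left; ring

lemma tendsto_neg_ramp_mul_pdf {h : ℝ} (hh : 0 < h) (a : ℝ) {l : Filter ℝ}
    (hl : l ≤ Filter.cocompact ℝ) :
    Filter.Tendsto (fun x => -(ramp h (x - a) * gaussianPDFReal 0 1 x)) l (nhds 0) := by
  have h1 := ((tendsto_pdf_zero hl).const_mul (2 * π * h))
  rw [mul_zero] at h1
  suffices hlim : Filter.Tendsto (fun x => ramp h (x - a) * gaussianPDFReal 0 1 x) l (nhds 0) by
    simpa using hlim.neg
  refine squeeze_zero (fun x => ?_) (fun x => ?_) h1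
  · exact mul_nonneg (ramp_nonneg hh _) (gaussianPDFReal_nonneg 0 1 x)
  · exact mul_le_mul_of_nonneg_right (ramp_le hh _) (gaussianPDFReal_nonneg 0 1 x)

/-- Stein's identity on an upper set: the boundary term at the left end point `b` is
`g(b - a) φ(b) ≥ 0`. -/
lemma setIntegral_steinDefect_nonneg {h : ℝ} (hh : 0 < h) (a : ℝ) {S : Set ℝ}
    (hS : IsUpperSet S) : 0 ≤ ∫ x in S, steinDefect a h x ∂gaussianReal 0 1 := by
  have hSm : MeasurableSet S := hS.ordConnected.measurableSet
  have hint : Integrable (fun x => gaussianPDFReal 0 1 x • steinDefect a h x) := by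
    have := integrable_steinDefect hh a
    rw [gaussianReal_of_var_ne_zero _ one_ne_zero, gaussianPDF_def,
      integrable_withDensity_iff_integrable_smul₀' (by fun_prop) (by simp)] at this
    refine this.congr (ae_of_all _ fun x => ?_)
    simp [ENNReal.toReal_ofReal (gaussianPDFReal_nonneg 0 1 x)]
  have hred : ∫ x in S, steinDefect a h x ∂gaussianReal 0 1
      = ∫ x in S, gaussianPDFReal 0 1 x • steinDefect a h x := by
    rw [← integral_indicator hSm, integral_gaussianReal_eq_integral_smul one_ne_zero,
      ← integral_indicator hSm]
    congr 1 with x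
    by_cases hx : x ∈ S <;> simp [hx]
  rw [hred]
  rcases S.eq_empty_or_nonempty with rfl | hne
  · simp
  by_cases hb : BddBelow S
  · have hae : S =ᵐ[volume] Set.Ioi (sInf S) := by
      have h1 : Set.Ioi (sInf S) ⊆ S := fun x hx => by
        obtain ⟨y, hy, hyx⟩ := exists_lt_of_csInf_lt hne hx
        exact hS hyx.le hy
      have h2 : S ⊆ Set.Ici (sInf S) := fun x hx => csInf_le hb hx
      exact Filter.EventuallyLE.antisymm
        (h2.eventuallyLE.trans Ioi_ae_eq_Ici.symm.le) h1.eventuallyLE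
    rw [setIntegral_congr_set hae, integral_Ioi_of_hasDerivAt_of_tendsto'
      (fun x _ => hasDerivAt_neg_ramp_mul_pdf hh a x) hint.integrableOn
      (tendsto_neg_ramp_mul_pdf hh a atTop_le_cocompact)]
    have := mul_nonneg (ramp_nonneg hh (sInf S - a)) (gaussianPDFReal_nonneg 0 1 (sInf S))
    linarith
  · have hu : S = Set.univ := by
      refine Set.eq_univ_of_forall fun x => ?_
      rw [not_bddBelow_iff] at hb
      obtain ⟨y, hy, hyx⟩ := hb x
      exact hS hyx.le hy
    rw [hu, setIntegral_univ, integral_of_hasDerivAt_of_tendsto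
      (fun x => hasDerivAt_neg_ramp_mul_pdf hh a x) hint
      (tendsto_neg_ramp_mul_pdf hh a atBot_le_cocompact)
      (tendsto_neg_ramp_mul_pdf hh a atTop_le_cocompact), sub_zero]

/-! ### The maximising coordinate -/

/-- `j` maximises `w i - a i`, and is the smallest index that does. The tie-breaking rule makes the
events `IsWinner a w j` disjoint in `j`. -/
def IsWinner {d : ℕ} (a w : Fin d → ℝ) (j : Fin d) : Prop :=
  ∀ i, w i - a i ≤ w j - a j ∧ (i < j → w i - a i < w j - a j)

lemma exists_isWinner {d : ℕ} (hd : 1 ≤ d) (a w : Fin d → ℝ) : ∃ j, IsWinner a w j := by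
  classical
  have : Nonempty (Fin d) := ⟨⟨0, hd⟩⟩
  obtain ⟨m, -, hm⟩ := Finset.exists_max_image Finset.univ (fun i => w i - a i)
    Finset.univ_nonempty
  let T := Finset.univ.filter fun i : Fin d => w m - a m ≤ w i - a i
  have hT : T.Nonempty := ⟨m, by simp [T]⟩
  have hmin : w m - a m ≤ w (T.min' hT) - a (T.min' hT) := by
    simpa [T] using T.min'_mem hT
  refine ⟨T.min' hT, fun i => ⟨(hm i (Finset.mem_univ i)).trans hmin, fun hi => ?_⟩⟩
  by_contra! hc
  exact absurd (T.min'_le i (by simpa [T] using hmin.trans hc)) (not_le.2 hi)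

lemma IsWinner.unique {d : ℕ} {a w : Fin d → ℝ} {j k : Fin d} (hj : IsWinner a w j)
    (hk : IsWinner a w k) : j = k := by
  rcases lt_trichotomy j k with h | h | h
  · exact absurd ((hk j).2 h) (not_lt.2 (hj k).1)
  · exact h
  · exact absurd ((hj k).2 h) (not_lt.2 (hk j).1)

lemma measurableSet_isWinner {d : ℕ} (a : Fin d → ℝ) (j : Fin d) :
    MeasurableSet {w : Fin d → ℝ | IsWinner a w j} := by
  have : {w : Fin d → ℝ | IsWinner a w j} = ⋂ i, ({w : Fin d → ℝ | w i - a i ≤ w j - a j} ∩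
      {w | i < j → w i - a i < w j - a j}) := by
    ext w; simp [IsWinner]
  rw [this]
  refine MeasurableSet.iInter fun i => (measurableSet_le (by fun_prop) (by fun_prop)).inter ?_
  by_cases hi : i < j
  · simpa [hi] using measurableSet_lt (f := fun w : Fin d → ℝ => w i - a i)
      (g := fun w => w j - a j) (by fun_prop) (by fun_prop)
  · simp [hi]

/-- If the coordinate `j` moves with slope `1` and no other coordinate moves faster, then `j` stays
the winner as the parameter increases. -/
lemma isUpperSet_isWinner {d : ℕ} (a z c : Fin d → ℝ) {j : Fin d} (hcj : c j = 1)
    (hc : ∀ i, c i ≤ 1) : IsUpperSet {x : ℝ | IsWinner a (fun i => z i + c i * x) j} := by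
  intro x y hxy hx i
  have h1 := hx i
  have h2 : c i * (y - x) ≤ y - x := by nlinarith [hc i]
  simp only [hcj] at h1 ⊢
  exact ⟨by linarith [h1.1], fun hi => by linarith [h1.2 hi]⟩

/-! ### Anti-concentration for unit variances -/

section Gaussian

variable {Ω : Type*} [MeasurableSpace Ω] {μ : Measure Ω} [IsProbabilityMeasure μ] {d : ℕ}
  {X : Ω → Fin d → ℝ}

/-- The integration by parts inequality on the event that the coordinate `j` is the maximising one.
The vector of residuals `X i - Cov(X i, X j) * X j` is independent of `X j`, and conditionally on it
the event is an upper set in `X j`. -/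
lemma setIntegral_isWinner_steinDefect_nonneg (hXm : Measurable X) (hG : HasGaussianLaw X μ)
    (hX : ∀ j, μ.map (fun ω => X ω j) = gaussianReal 0 1) (a : Fin d → ℝ) {h : ℝ} (hh : 0 < h)
    (j : Fin d) :
    0 ≤ ∫ ω in {ω | IsWinner a (X ω) j}, steinDefect (a j) h (X ω j) ∂μ := by
  have hm : ∀ i, Measurable fun ω => X ω i := fun i => by fun_prop
  have hvar : ∀ i, Var[fun ω => X ω i; μ] = 1 := fun i => by
    have := variance_id_map (μ := μ) (X := fun ω => X ω i) (hm i).aemeasurable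
    rw [hX i, variance_id_gaussianReal] at this
    simpa using this.symm
  have hL2 : ∀ i, MemLp (fun ω => X ω i) 2 μ := fun i =>
    (HasGaussianLaw.eval (X := fun i ω => X ω i) hG i).memLp_two
  let c : Fin d → ℝ := fun i => cov[fun ω => X ω i, fun ω => X ω j; μ]
  have hcj : c j = 1 := by simp only [c]; rw [covariance_self (hm j).aemeasurable, hvar]
  -- `0 ≤ Var(X i - X j) = 2 - 2 * c i`.
  have hc : ∀ i, c i ≤ 1 := fun i => by
    have h1 := variance_fun_sub (hL2 i) (hL2 j)
    have h2 := variance_nonneg (fun ω => X ω i - X ω j) μ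
    rw [hvar, hvar] at h1
    simp only [c]
    linarith
  let Z : Ω → Fin d → ℝ := fun ω i => X ω i - c i * X ω j
  have hZm : Measurable Z := by fun_prop
  have hind : IndepFun Z (fun ω => X ω j) μ := by
    let L : (Fin d → ℝ) →L[ℝ] (Fin d → ℝ) × (Unit → ℝ) :=
      (ContinuousLinearMap.pi fun i => ContinuousLinearMap.proj (R := ℝ) (φ := fun _ => ℝ) i
        - c i • ContinuousLinearMap.proj (R := ℝ) (φ := fun _ => ℝ) j).prod
      (ContinuousLinearMap.pi fun _ => ContinuousLinearMap.proj (R := ℝ) (φ := fun _ => ℝ) j)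
    have hj := HasGaussianLaw.indepFun_of_covariance_eval (P := μ)
      (X := fun (i : Fin d) ω => X ω i - c i * X ω j) (Y := fun (_ : Unit) ω => X ω j)
      (hG.map_fun L) fun i _ => by
        rw [covariance_fun_sub_left (hL2 i) ((hL2 j).const_mul _) (hL2 j),
          covariance_const_mul_left, covariance_self (hm j).aemeasurable, hvar]
        simp [c]
    exact hj.comp (φ := id) (ψ := fun y : Unit → ℝ => y ()) measurable_id (by fun_prop)
  have hlaw : μ.map (fun ω => (Z ω, X ω j)) = (μ.map Z).prod (gaussianReal 0 1) := by
    rw [(indepFun_iff_map_prod_eq_prod_map_map hZm.aemeasurable (hm j).aemeasurable).1 hind, hX]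
  have : IsProbabilityMeasure (μ.map Z) := Measure.isProbabilityMeasure_map hZm.aemeasurable
  let A : Set ((Fin d → ℝ) × ℝ) := {p | IsWinner a (fun i => p.1 i + c i * p.2) j}
  have hA : MeasurableSet A :=
    (show Measurable fun p : (Fin d → ℝ) × ℝ => fun i => p.1 i + c i * p.2 by fun_prop)
      (measurableSet_isWinner a j)
  let F : (Fin d → ℝ) × ℝ → ℝ := A.indicator fun p => steinDefect (a j) h p.2
  have hFm : Measurable F :=
    Measurable.indicator (by fun_prop) hA
  have hFint : Integrable F ((μ.map Z).prod (gaussianReal 0 1)) :=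
    ((integrable_steinDefect hh (a j)).comp_snd _).indicator hA
  have key : ∫ ω in {ω | IsWinner a (X ω) j}, steinDefect (a j) h (X ω j) ∂μ
      = ∫ p, F p ∂((μ.map Z).prod (gaussianReal 0 1)) := by
    rw [← hlaw, integral_map (by fun_prop) hFm.aestronglyMeasurable,
      ← integral_indicator (show MeasurableSet {ω | IsWinner a (X ω) j} from
        hXm (measurableSet_isWinner a j))]
    congr 1 with ω
    have hZX : (fun i => Z ω i + c i * X ω j) = X ω := by ext i; simp [Z]
    have hiff : (Z ω, X ω j) ∈ A ↔ IsWinner a (X ω) j := by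
      simp only [A, Set.mem_ofPred_eq, hZX]
    by_cases hω : IsWinner a (X ω) j
    · rw [Set.indicator_of_mem (show ω ∈ {ω | IsWinner a (X ω) j} from hω)]
      exact (Set.indicator_of_mem (hiff.2 hω) (fun p => steinDefect (a j) h p.2)).symm
    · rw [Set.indicator_of_notMem (show ω ∉ {ω | IsWinner a (X ω) j} from hω)]
      exact (Set.indicator_of_notMem (fun hmem => hω (hiff.1 hmem))
        (fun p => steinDefect (a j) h p.2)).symm
  rw [key, integral_prod _ hFint]
  refine integral_nonneg fun z => ?_
  have hU := isUpperSet_isWinner a z c hcj hc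
  refine (setIntegral_steinDefect_nonneg hh (a j) hU).trans_eq ?_
  rw [← integral_indicator hU.ordConnected.measurableSet]
  rfl

/-- Every coordinate, hence also the maximal one, is at most a quantity whose Gaussian expectation
is explicit; it comes from `x ≤ K + K⁻¹ exp (K (x - K))`. -/
lemma max_le_add_sum_exp {K : ℝ} (hK : 0 < K) (w : Fin d → ℝ) (j : Fin d) :
    w j ≤ K + ∑ i, K⁻¹ * (exp (-K ^ 2) * exp (K * w i)) := by
  have h1 : w j - K ≤ K⁻¹ * (exp (-K ^ 2) * exp (K * w j)) := by
    rw [← exp_add, ← div_eq_inv_mul, le_div_iff₀ hK]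
    have := add_one_le_exp (-K ^ 2 + K * w j)
    nlinarith
  have h2 := Finset.single_le_sum (f := fun i => K⁻¹ * (exp (-K ^ 2) * exp (K * w i)))
    (fun i _ => by positivity) (Finset.mem_univ j)
  linarith

/-- Nazarov's inequality for a Gaussian vector with standard marginals: the event is
`max_i (X i - a i) ∈ [0, h]`. -/
theorem measureReal_slab_le (hd : 1 ≤ d) (hXm : Measurable X) (hG : HasGaussianLaw X μ)
    (hX : ∀ j, μ.map (fun ω => X ω j) = gaussianReal 0 1) (a : Fin d → ℝ) {h : ℝ} (hh : 0 < h) :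
    μ.real {ω | (∀ i, X ω i ≤ a i + h) ∧ ∃ i, a i ≤ X ω i} ≤
      4 * √2 * π * h * √(max 1 (log d)) := by
  set E : Set Ω := {ω | (∀ i, X ω i ≤ a i + h) ∧ ∃ i, a i ≤ X ω i} with hE
  have hm : ∀ i, Measurable fun ω => X ω i := fun i => by fun_prop
  have hEm : MeasurableSet E := by
    have : E = (⋂ i, {ω | X ω i ≤ a i + h}) ∩ ⋃ i, {ω | a i ≤ X ω i} := by
      ext ω; simp [hE]
    rw [this]
    exact (MeasurableSet.iInter fun i => measurableSet_le (hm i) (by fun_prop)).inter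
      (MeasurableSet.iUnion fun i => measurableSet_le (by fun_prop) (hm i))
  have hd' : (0 : ℝ) < d := by exact_mod_cast hd
  set ℓ : ℝ := max 1 (log d) with hℓ
  have hℓ1 : 1 ≤ ℓ := le_max_left _ _
  -- With `K ^ 2 = 2 * ℓ`, the exponential tail `d * exp (-K ^ 2 / 2)` is at most `1`.
  set K : ℝ := √2 * √ℓ with hKdef
  have hK2 : K ^ 2 = 2 * ℓ := by
    rw [hKdef, mul_pow, sq_sqrt (by norm_num), sq_sqrt (by linarith)]
  have hK0 : 0 < K := by positivity
  have hexp : exp (-ℓ) * d ≤ 1 := by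
    rw [exp_neg, inv_mul_le_one₀ (exp_pos _), ← log_le_iff_le_exp hd']
    exact le_max_right _ _
  let A : Fin d → Set Ω := fun j => {ω | IsWinner a (X ω) j}
  have hA : ∀ j, MeasurableSet (A j) := fun j => hXm (measurableSet_isWinner a j)
  -- Only the winner contributes to the sum, and on `E` its Stein defect loses at least `1`.
  have hpt : ∀ ω, E.indicator (fun _ => (1 : ℝ)) ω
      + ∑ j, (A j).indicator (fun ω => steinDefect (a j) h (X ω j)) ω
      ≤ 2 * π * h * (K + ∑ i, K⁻¹ * (exp (-K ^ 2) * exp (K * X ω i))) := by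
    intro ω
    obtain ⟨j, hj⟩ := exists_isWinner hd a (X ω)
    rw [Finset.sum_eq_single j
      (fun k _ hk => Set.indicator_of_notMem (fun hk' => hk (IsWinner.unique hk' hj)) _)
      (by simp), Set.indicator_of_mem (show ω ∈ A j from hj)]
    have h1 : E.indicator (fun _ => (1 : ℝ)) ω ≤ rampDeriv h (X ω j - a j) := by
      by_cases hω : ω ∈ E
      · rw [Set.indicator_of_mem hω]
        obtain ⟨hu, i, hi⟩ := hω
        exact one_le_rampDeriv hh (by linarith [(hj i).1]) (by linarith [hu j])
      · rw [Set.indicator_of_notMem hω]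
        exact rampDeriv_nonneg _ _
    have h2 := max_le_add_sum_exp hK0 (X ω) j
    have h3 : 0 ≤ K + ∑ i, K⁻¹ * (exp (-K ^ 2) * exp (K * X ω i)) := by positivity
    have h4 : X ω j * ramp h (X ω j - a j) ≤
        (K + ∑ i, K⁻¹ * (exp (-K ^ 2) * exp (K * X ω i))) * (2 * π * h) :=
      (mul_le_mul_of_nonneg_right h2 (ramp_nonneg hh _)).trans
        (mul_le_mul_of_nonneg_left (ramp_le hh _) h3)
    simp only [steinDefect]
    linarith
  have hSint : ∀ j, Integrable (fun ω => steinDefect (a j) h (X ω j)) μ := fun j => by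
    have := integrable_steinDefect hh (a j)
    rw [← hX j] at this
    exact this.comp_measurable (hm j)
  have hEint : ∀ i, Integrable (fun ω => exp (K * X ω i)) μ := fun i => by
    have := integrable_exp_mul_gaussianReal (μ := 0) (v := 1) K
    rw [← hX i] at this
    exact this.comp_measurable (hm i)
  have hEval : ∀ i, ∫ ω, exp (K * X ω i) ∂μ = exp ℓ := fun i => by
    have := mgf_gaussianReal (hX i) K
    rw [mgf] at this
    rw [this]
    congr 1
    push_cast
    linarith
  have hI1 : Integrable (E.indicator fun _ => (1 : ℝ)) μ := (integrable_const 1).indicator hEm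
  have hI2 : ∀ j ∈ Finset.univ,
      Integrable ((A j).indicator fun ω => steinDefect (a j) h (X ω j)) μ :=
    fun j _ => (hSint j).indicator (hA j)
  have hI3 : ∀ i ∈ Finset.univ,
      Integrable (fun ω => K⁻¹ * (exp (-K ^ 2) * exp (K * X ω i))) μ :=
    fun i _ => ((hEint i).const_mul _).const_mul _
  have hmono := integral_mono (hI1.add (integrable_finsetSum _ hI2))
    (((integrable_const K).add (integrable_finsetSum _ hI3)).const_mul (2 * π * h))
    (fun ω => by simpa using hpt ω)
  simp only [Pi.add_apply] at hmono
  rw [integral_add hI1 (integrable_finsetSum _ hI2), integral_finsetSum _ hI2,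
    integral_const_mul, integral_add (integrable_const K) (integrable_finsetSum _ hI3),
    integral_finsetSum _ hI3, integral_indicator hEm] at hmono
  simp only [integral_const_mul, hEval, integral_const, probReal_univ, smul_eq_mul, one_mul,
    mul_one, Finset.sum_const, Finset.card_univ, Fintype.card_fin, nsmul_eq_mul,
    measureReal_restrict_apply_univ] at hmono
  have hnn : 0 ≤ ∑ j, ∫ ω, (A j).indicator (fun ω => steinDefect (a j) h (X ω j)) ω ∂μ :=
    Finset.sum_nonneg fun j _ => by
      rw [integral_indicator (hA j)]
      exact setIntegral_isWinner_steinDefect_nonneg hXm hG hX a hh j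
  have htail : d * (K⁻¹ * (exp (-K ^ 2) * exp ℓ)) ≤ K := by
    rw [← exp_add, hK2, show -(2 * ℓ) + ℓ = -ℓ by ring]
    have : d * (K⁻¹ * exp (-ℓ)) = (exp (-ℓ) * d) / K := by field_simp
    rw [this, div_le_iff₀ hK0]
    nlinarith
  have hfin : 2 * π * h * (K + d * (K⁻¹ * (exp (-K ^ 2) * exp ℓ))) ≤ 2 * π * h * (K + K) := by
    gcongr
  have : 2 * π * h * (K + K) = 4 * √2 * π * h * √ℓ := by rw [hKdef]; ring
  linarith

end Gaussian

/-! ### Reduction to unit variances -/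

/-- **Anti-concentration bound for maxima of Gaussian random vectors.**
There is a universal constant `C > 0` such that for every zero-mean Gaussian random
vector `Y` in `ℝ^d` (every linear functional of `Y` has a centered Gaussian law) with
marginal standard deviations `σ j > 0`, and every `ε > 0`,
`sup_r P(|max_j Y_j − r| ≤ ε) ≤ C ε (σ̄/σ̲²) √(ln⁺(σ̲ d / ε))`. -/
theorem stmt_0 :
    ∃ C : ℝ, 0 < C ∧
      ∀ (d : ℕ), 1 ≤ d →
      ∀ (Ω : Type) [MeasurableSpace Ω] (μ : Measure Ω) [IsProbabilityMeasure μ]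
        (Y : Ω → Fin d → ℝ) (σ : Fin d → ℝ),
        Measurable Y →
        (∀ t : Fin d → ℝ, ∃ v : NNReal,
          Measure.map (fun ω => ∑ j, t j * Y ω j) μ = gaussianReal 0 v) →
        (∀ j, 0 < σ j ∧ σ j ^ 2 = ∫ ω, (Y ω j) ^ 2 ∂μ) →
        ∀ ε : ℝ, 0 < ε → ∀ r : ℝ,
          (μ {ω | |(⨆ j, Y ω j) - r| ≤ ε}).toReal ≤
            C * ε * ((⨆ j, σ j) / (⨅ j, σ j) ^ 2) *
              Real.sqrt (max 1 (Real.log ((⨅ j, σ j) * d / ε))) := by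
  refine ⟨8 * √2 * π, by positivity, ?_⟩
  intro d hd Ω _ μ _ Y σ hYm hYG hσ ε hε r
  have : Nonempty (Fin d) := ⟨⟨0, hd⟩⟩
  have hd' : (1 : ℝ) ≤ d := by exact_mod_cast hd
  set s : ℝ := ⨅ j, σ j with hs
  set S : ℝ := ⨆ j, σ j with hS
  have hs_le : ∀ j, s ≤ σ j := fun j => ciInf_le (Set.finite_range σ).bddBelow j
  have hle_S : ∀ j, σ j ≤ S := fun j => le_ciSup (Set.finite_range σ).bddAbove j
  have hs0 : 0 < s := by
    obtain ⟨j, hj⟩ := exists_eq_ciInf_of_finite (f := σ)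
    rw [hs, ← hj]
    exact (hσ j).1
  have hsS : s ≤ S := (hs_le ⟨0, hd⟩).trans (hle_S ⟨0, hd⟩)
  have hratio : 1 / s ≤ S / s ^ 2 := by
    rw [div_le_div_iff₀ hs0 (by positivity)]
    nlinarith
  set L : ℝ := max 1 (log (s * d / ε)) with hL
  have hL1 : 1 ≤ √L := one_le_sqrt.2 (le_max_left _ _)
  have hC : 1 ≤ 8 * √2 * π := by
    have h1 : 1 ≤ √2 := one_le_sqrt.2 (by norm_num)
    nlinarith [pi_gt_three]
  have hY : HasGaussianLaw Y μ := by
    refine ⟨isGaussian_of_map_eq_gaussianReal fun T => ?_⟩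
    obtain ⟨v, hv⟩ := hYG fun j => T (Pi.single j 1)
    refine ⟨0, v, ?_⟩
    rw [← hv, Measure.map_map (by fun_prop) hYm]
    congr 1 with ω
    simp only [Function.comp_apply]
    conv_lhs => rw [← Finset.univ_sum_single (Y ω), map_sum]
    refine Finset.sum_congr rfl fun j _ => ?_
    rw [show (Pi.single j (Y ω j) : Fin d → ℝ) = Y ω j • Pi.single j 1 by simp [← Pi.single_smul],
      map_smul, smul_eq_mul, mul_comm]
  have hYj : ∀ j, μ.map (fun ω => Y ω j) = gaussianReal 0 (σ j ^ 2).toNNReal := fun j => by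
    obtain ⟨v, hv⟩ := hYG (Pi.single j 1)
    simp only [Pi.single_apply, ite_mul, one_mul, zero_mul, Finset.sum_ite_eq',
      Finset.mem_univ, if_true] at hv
    rw [hv]
    congr 1
    have h1 := variance_fun_id_gaussianReal (μ := 0) (v := v)
    rw [variance_eq_integral measurable_id'.aemeasurable, integral_id_gaussianReal, ← hv,
      integral_map (by fun_prop) (by fun_prop)] at h1
    simp only [sub_zero] at h1
    rw [(hσ j).2, h1, Real.toNNReal_coe]
  -- For `ε > s` the right-hand side exceeds `1`; otherwise `log d ≤ log (s * d / ε)`.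
  by_cases hεs : s < ε
  · calc (μ {ω | |(⨆ j, Y ω j) - r| ≤ ε}).toReal ≤ 1 := measureReal_le_one
      _ ≤ 8 * √2 * π * (ε * (1 / s)) * √L := by
        have h1 : 1 ≤ ε * (1 / s) := by rw [mul_one_div, le_div_iff₀ hs0]; linarith
        exact one_le_mul_of_one_le_of_one_le (one_le_mul_of_one_le_of_one_le hC h1) hL1
      _ ≤ 8 * √2 * π * (ε * (S / s ^ 2)) * √L := by gcongr
      _ = _ := by ring
  push Not at hεs
  let X : Ω → Fin d → ℝ := fun ω j => (σ j)⁻¹ * Y ω j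
  have hXm : Measurable X := by fun_prop
  have hX : HasGaussianLaw X μ :=
    hY.map_fun (ContinuousLinearMap.pi fun j =>
      (σ j)⁻¹ • ContinuousLinearMap.proj (R := ℝ) (φ := fun _ => ℝ) j)
  have hXj : ∀ j, μ.map (fun ω => X ω j) = gaussianReal 0 1 := fun j => by
    have h1 : (fun ω => X ω j) = (fun x => (σ j)⁻¹ * x) ∘ fun ω => Y ω j := rfl
    rw [h1, ← Measure.map_map (by fun_prop) (by fun_prop), hYj, gaussianReal_map_const_mul,
      mul_zero]
    congr 1
    ext
    have := (hσ j).1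
    simp [Real.coe_toNNReal _ (sq_nonneg (σ j)), this.ne']
  have hsub : {ω | |(⨆ j, Y ω j) - r| ≤ ε} ⊆
      {ω | (∀ i, X ω i ≤ (r - ε) / σ i + 2 * ε / s) ∧ ∃ i, (r - ε) / σ i ≤ X ω i} := by
    intro ω hω
    rw [Set.mem_ofPred_eq, abs_le] at hω
    refine ⟨fun i => ?_, ?_⟩
    · have h1 : Y ω i ≤ r + ε :=
        (le_ciSup (Set.finite_range (Y ω)).bddAbove i).trans (by linarith)
      have h2 := (hσ i).1
      calc X ω i = Y ω i / σ i := by simp only [X]; field_simp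
        _ ≤ (r + ε) / σ i := by gcongr
        _ = (r - ε) / σ i + 2 * ε / σ i := by ring
        _ ≤ _ := by gcongr; exact hs_le i
    · obtain ⟨i, hi⟩ := exists_eq_ciSup_of_finite (f := Y ω)
      have h2 := (hσ i).1
      refine ⟨i, ?_⟩
      calc (r - ε) / σ i ≤ Y ω i / σ i := by gcongr; rw [hi]; linarith
        _ = X ω i := by simp only [X]; field_simp
  have hlog : log d ≤ log (s * d / ε) := by
    refine log_le_log (by linarith) ?_
    rw [le_div_iff₀ hε]
    nlinarith
  calc (μ {ω | |(⨆ j, Y ω j) - r| ≤ ε}).toReal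
      ≤ μ.real {ω | (∀ i, X ω i ≤ (r - ε) / σ i + 2 * ε / s) ∧ ∃ i, (r - ε) / σ i ≤ X ω i} :=
        measureReal_mono hsub
    _ ≤ 4 * √2 * π * (2 * ε / s) * √(max 1 (log d)) :=
        measureReal_slab_le hd hXm hX hXj (fun i => (r - ε) / σ i) (by positivity)
    _ ≤ 4 * √2 * π * (2 * ε / s) * √L := by gcongr; exact max_le_max_left _ hlog
    _ = 8 * √2 * π * (ε * (1 / s)) * √L := by ring
    _ ≤ 8 * √2 * π * (ε * (S / s ^ 2)) * √L := by gcongr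
    _ = _ := by ring
end

section
/- For κ > 0 let G_κ : R^d → R be the smooth-max function G_κ(x) = κ⁻¹ ln(Σ_{j=1}^d e^{κ x_j}). Then for every v, x, y ∈ R^d, the second derivative of G_κ at v applied to (x, y) satisfies |G_κ''(v)(x, y)| ≤ 2κ ‖x‖_∞ ‖y‖_∞, where ‖·‖_∞ is the maximum norm on R^d. -/
/-!
Write `e_j = exp (κ u_j)` and `S = ∑ j, e_j`. The gradient of the smooth maximum is the softmax
vector `e_j / S`, and differentiating once more shows that the Hessian is `κ` times the covariance
of two functions under the probability weights `e_j / S`: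
`G''(v)(x, y) = κ (∑ e_j x_j y_j / S - (∑ e_j x_j / S) (∑ e_j y_j / S))`.
Each of the two terms is a (product of) weighted averages, hence at most `‖x‖ ‖y‖` in absolute
value (`abs_sum_mul_le`), which gives the factor `2 κ`. For `d = 0` both sides vanish, whatever
the junk value `log 0` is.
-/

open Real

/-- The smooth-max function `G_κ(x) = κ⁻¹ ln(Σ_j exp(κ x_j))`. -/
noncomputable def smoothMax (d : ℕ) (κ : ℝ) (x : Fin d → ℝ) : ℝ :=
  κ⁻¹ * Real.log (∑ j, Real.exp (κ * x j))

/-- The derivative of one exponential weight `u ↦ exp (κ u_j)`. -/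
lemma hasFDerivAt_expWeight (d : ℕ) (κ : ℝ) (j : Fin d) (u : Fin d → ℝ) :
    HasFDerivAt (fun u : Fin d → ℝ => Real.exp (κ * u j))
      (Real.exp (κ * u j) • κ • (ContinuousLinearMap.proj j : (Fin d → ℝ) →L[ℝ] ℝ)) u :=
  ((ContinuousLinearMap.proj (R := ℝ) (φ := fun _ : Fin d => ℝ) j).hasFDerivAt.const_mul κ).exp

lemma hasFDerivAt_sum_expWeight (d : ℕ) (κ : ℝ) (u : Fin d → ℝ) :
    HasFDerivAt (fun u : Fin d → ℝ => ∑ j, Real.exp (κ * u j))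
      (∑ j, Real.exp (κ * u j) • κ • (ContinuousLinearMap.proj j : (Fin d → ℝ) →L[ℝ] ℝ)) u :=
  HasFDerivAt.fun_sum fun j _ => hasFDerivAt_expWeight d κ j u

lemma sum_expWeight_pos (d : ℕ) [NeZero d] (κ : ℝ) (u : Fin d → ℝ) :
    0 < ∑ j, Real.exp (κ * u j) :=
  Finset.sum_pos (fun _ _ => Real.exp_pos _) Finset.univ_nonempty

/-- The derivative of the smooth maximum is the softmax functional. -/
lemma fderiv_smoothMax (d : ℕ) [NeZero d] (κ : ℝ) (hκ : 0 < κ) :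
    fderiv ℝ (smoothMax d κ) = fun u => (∑ j, Real.exp (κ * u j))⁻¹ •
      ∑ j, Real.exp (κ * u j) • (ContinuousLinearMap.proj j : (Fin d → ℝ) →L[ℝ] ℝ) := by
  funext u
  have h := ((hasFDerivAt_sum_expWeight d κ u).log (sum_expWeight_pos d κ u).ne').const_mul κ⁻¹
  refine (HasFDerivAt.fderiv (f := smoothMax d κ) h).trans ?_
  rw [smul_comm κ⁻¹, Finset.smul_sum]
  congr 1
  refine Finset.sum_congr rfl fun j _ => ?_
  rw [smul_comm κ⁻¹, inv_smul_smul₀ hκ.ne']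

/-- The Hessian of the smooth maximum is `κ` times a covariance under the softmax weights. -/
lemma fderiv_fderiv_smoothMax (d : ℕ) [NeZero d] (κ : ℝ) (hκ : 0 < κ) (v x y : Fin d → ℝ) :
    fderiv ℝ (fderiv ℝ (smoothMax d κ)) v x y =
      κ * ((∑ j, Real.exp (κ * v j))⁻¹ * (∑ j, Real.exp (κ * v j) * (x j * y j)) -
        ((∑ j, Real.exp (κ * v j))⁻¹ * ∑ j, Real.exp (κ * v j) * x j) *
        ((∑ j, Real.exp (κ * v j))⁻¹ * ∑ j, Real.exp (κ * v j) * y j)) := by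
  rw [fderiv_smoothMax d κ hκ]
  have hS := (sum_expWeight_pos d κ v).ne'
  have hA : HasFDerivAt (fun u : Fin d → ℝ => ∑ j, Real.exp (κ * u j) •
      (ContinuousLinearMap.proj j : (Fin d → ℝ) →L[ℝ] ℝ)) _ v :=
    HasFDerivAt.fun_sum fun j _ => (hasFDerivAt_expWeight d κ j v).smul_const
      (ContinuousLinearMap.proj j : (Fin d → ℝ) →L[ℝ] ℝ)
  have hI := (hasDerivAt_inv hS).comp_hasFDerivAt v (hasFDerivAt_sum_expWeight d κ v)
  have h := (hI.smul hA).fderiv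
  have h1 : ∑ j, Real.exp (κ * v j) * (κ * x j) = κ * ∑ j, Real.exp (κ * v j) * x j := by
    rw [Finset.mul_sum]; exact Finset.sum_congr rfl fun j _ => by ring
  have h2 : ∑ j, Real.exp (κ * v j) * (κ * x j) * y j =
      κ * ∑ j, Real.exp (κ * v j) * (x j * y j) := by
    rw [Finset.mul_sum]; exact Finset.sum_congr rfl fun j _ => by ring
  refine (congrArg (fun L => L x y) h).trans ?_
  simp [h1, h2]
  ring

/-- A weighted average with nonnegative weights is bounded by any bound on the values. -/
lemma abs_sum_mul_le {ι : Type*} [Fintype ι] (w f : ι → ℝ) (hw : ∀ j, 0 ≤ w j)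
    (hS : 0 < ∑ j, w j) (C : ℝ) (hf : ∀ j, |f j| ≤ C) :
    |(∑ j, w j)⁻¹ * ∑ j, w j * f j| ≤ C := by
  rw [abs_mul, abs_of_pos (inv_pos.2 hS), inv_mul_le_iff₀ hS, Finset.sum_mul]
  refine (Finset.abs_sum_le_sum_abs _ _).trans (Finset.sum_le_sum fun j _ => ?_)
  rw [abs_mul, abs_of_nonneg (hw j)]
  exact mul_le_mul_of_nonneg_left (hf j) (hw j)

/-- The second Fréchet derivative of the smooth-max function satisfies
`|G_κ''(v)(x, y)| ≤ 2κ ‖x‖_∞ ‖y‖_∞` (the norm on `Fin d → ℝ` is the maximum norm). -/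
theorem stmt_9 (d : ℕ) (κ : ℝ) (hκ : 0 < κ) (v x y : Fin d → ℝ) :
    |fderiv ℝ (fderiv ℝ (smoothMax d κ)) v x y| ≤ 2 * κ * ‖x‖ * ‖y‖ := by
  rcases Nat.eq_zero_or_pos d with rfl | hd
  · rw [Subsingleton.elim x 0, map_zero]
    simpa only [zero_apply, abs_zero] using
      (by positivity : 0 ≤ 2 * κ * ‖(0 : Fin 0 → ℝ)‖ * ‖y‖)
  have : NeZero d := ⟨hd.ne'⟩
  rw [fderiv_fderiv_smoothMax d κ hκ, abs_mul, abs_of_pos hκ]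
  have hx : ∀ j, |x j| ≤ ‖x‖ := fun j => norm_le_pi_norm x j
  have hy : ∀ j, |y j| ≤ ‖y‖ := fun j => norm_le_pi_norm y j
  have hS := sum_expWeight_pos d κ v
  have hw : ∀ j, 0 ≤ Real.exp (κ * v j) := fun j => (Real.exp_pos _).le
  have bxy := abs_sum_mul_le _ (fun j => x j * y j) hw hS (‖x‖ * ‖y‖) fun j => by
    rw [abs_mul]; exact mul_le_mul (hx j) (hy j) (abs_nonneg _) (norm_nonneg _)
  have bx := abs_sum_mul_le _ x hw hS _ hx
  have b_y := abs_sum_mul_le _ y hw hS _ hy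
  have bp := mul_le_mul bx b_y (abs_nonneg _) (norm_nonneg _)
  rw [← abs_mul] at bp
  calc _ ≤ κ * (‖x‖ * ‖y‖ + ‖x‖ * ‖y‖) :=
        mul_le_mul_of_nonneg_left ((abs_sub _ _).trans (add_le_add bxy bp)) hκ.le
    _ = _ := by ring
end

section
/- Let {X_i}_{i=1}^n be an R^d-valued martingale difference sequence adapted to {F_i}_{i=1}^n, F_0 ⊂ F_1 a sub-σ-field with E[X_1 | F_0] = 0 a.s. and E[‖X_i‖_∞³ | F_0] < ∞ a.s., S := Σ_{i≤n} X_i, and T a random vector whose conditional distribution given F_0 is N(0, V) with V a version of E[S Sᵀ | F_0]. Let g : R → R be bounded with three bounded continuous derivatives, and let G_κ(x) := κ⁻¹ ln(Σ_{j=1}^d e^{κ x_j}) for κ > 0. Then there exists a universal constant C > 0 such that for every κ > 0, almost surely, |E[g(G_κ(S)) − g(G_κ(T)) | F_0]| ≤ C[(‖g''‖ + κ‖g'‖)β + (‖g'''‖ + κ‖g''‖ + κ²‖g'‖)Γ], where ‖·‖ is the sup norm, β := Σ_{i=1}^n E[‖E[X_i X_iᵀ | F_{i−1}] − Σ_i‖_{e,1}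 | F_0] with Σ_i = E[X_i X_iᵀ | F_0] a.s. and ‖A‖_{e,1} the sum of absolute values of the entries of A, and Γ := Σ_{i=1}^n (E[‖X_i‖_∞³ | F_0] + (σ̄_i² ln⁺ d)^{3/2}) with σ̄_i² := max_{1≤j≤d} [Σ_i]_{jj}. -/
/-!
The proof is a Lindeberg replacement for `f = g ∘ G_κ`, run backwards in time and conditionally on
`F 0`.

For a matrix `B` let `smooth f x B = E f (x + B Z)` with `Z` standard Gaussian in `ℝ^d`; it depends
on `B` only through `gram B = B Bᵀ`. Write `Σ_i` for the `F 0`-conditional covariance of `X_i`,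
`W_k = X_1 + ⋯ + X_k`, `R_k = Σ_{k+1} + ⋯ + Σ_n`, and let `B_k` be an `F 0`-measurable square root
of `R_k` (`exists_measurable_sqrt`). The variables `φ_k = smooth f W_k B_k` interpolate between
`φ_n = f S` and `φ_0 = smooth f 0 B_0`. Since the martingale differences are orthogonal, `R_0 = V`
(`condExp_sum_mul_sum`), and comparing characteristic functions on each event of `F 0` shows
`φ_0 = E[f T | F 0]` (`condExp_gaussian`).

It remains to bound `E[φ_k - φ_{k-1} | F 0]` (`lindeberg_step`). Expand
`smooth f (W_{k-1} + X_k) B_k` to second order in `X_k`, and `smooth f W_{k-1} B_{k-1}` to second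
order in an independent Gaussian increment of covariance `Σ_k`. Given `F (k-1)`, the first-order
term in `X_k` has mean zero, and `X_k X_kᵀ` may be replaced by its conditional mean; its distance
to `Σ_k` produces `β`. The cubic remainders produce `Γ`, the Gaussian one through the bound
`E ‖N(0, Σ_k)‖_∞³ ≤ 114 (σ̄_k² ln⁺ d)^{3/2}` (`integral_norm_lin_le`). The step needs no smoothness
of `f` beyond a second-order Taylor expansion with cubic remainder, whose constants for `g ∘ G_κ`
do not depend on `d`, because the partial derivatives of `G_κ` are the softmax weights, which sum
to one (`hasTaylor_smoothMax`).

The Gaussian remainder enters through an `F 0`-measurable bound; it passes through `E[· | F 0]` by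
localisation to the sublevel sets of that bound (`abs_condExp_le_of_measurable`), so its
integrability plays no role.
-/

open MeasureTheory ProbabilityTheory Real

/-- `ln⁺ x = max(1, ln x)`. -/
noncomputable def lnPlus (x : ℝ) : ℝ := max 1 (Real.log x)

/-! ### Measurable square roots of positive semidefinite arrays -/

/-- Elementary form of positive semidefiniteness for a real square array. -/
def IsPSD {d : ℕ} (A : Fin d → Fin d → ℝ) : Prop :=
  (∀ j k, A j k = A k j) ∧ ∀ t : Fin d → ℝ, 0 ≤ ∑ j, ∑ k, t j * A j k * t k

/-- The covariance array `B Bᵀ` of the linear image `B Z` of a standard Gaussian vector `Z`. -/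
def gram {d : ℕ} (B : Fin d → Fin d → ℝ) : Fin d → Fin d → ℝ :=
  fun j k => ∑ l, B j l * B k l

lemma isPSD_iff {d : ℕ} (A : Fin d → Fin d → ℝ) : IsPSD A ↔ (Matrix.of A).PosSemidef := by
  rw [Matrix.posSemidef_iff_dotProduct_mulVec]
  unfold IsPSD
  refine and_congr ?_ (forall_congr' fun t => ?_)
  · rw [Matrix.IsHermitian.ext_iff]
    simp only [Matrix.of_apply, star_trivial]
    exact ⟨fun h i j => h j i, fun h i j => h j i⟩
  · simp only [dotProduct, Matrix.mulVec, Finset.mul_sum, Matrix.of_apply, star_trivial, mul_assoc]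

/-- A measurable square root on positive semidefinite arrays. Squaring is continuous and injective
on the Polish space of positive semidefinite matrices, so by Lusin–Souslin it has a measurable
left inverse. -/
lemma exists_measurable_sqrt (d : ℕ) : ∃ r : (Fin d → Fin d → ℝ) → (Fin d → Fin d → ℝ),
    Measurable r ∧ ∀ A, IsPSD A → gram (r A) = A := by
  classical
  let s : Set (Fin d → Fin d → ℝ) := {A | IsPSD A}
  have hs : IsClosed s := by
    have : s = (⋂ j, ⋂ k, {A : Fin d → Fin d → ℝ | A j k = A k j}) ∩
        ⋂ t : Fin d → ℝ, {A : Fin d → Fin d → ℝ | 0 ≤ ∑ j, ∑ k, t j * A j k * t k} := by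
      ext A; simp [s, IsPSD]
    rw [this]
    refine IsClosed.inter ?_ ?_
    · exact isClosed_iInter fun j => isClosed_iInter fun k => isClosed_eq (by fun_prop) (by fun_prop)
    · exact isClosed_iInter fun t => isClosed_le (by fun_prop) (by fun_prop)
  have hc : Continuous (gram (d := d)) := by unfold gram; fun_prop
  have hmul : ∀ A ∈ s, Matrix.of (gram A) = Matrix.of A * Matrix.of A := by
    intro A hA
    ext j k
    simp only [gram, Matrix.of_apply, Matrix.mul_apply]
    exact Finset.sum_congr rfl fun l _ => by rw [hA.1 k l]
  open scoped MatrixOrder Matrix.Norms.L2Operator in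
  have hinj : Set.InjOn (gram (d := d)) s := by
    intro A hA B hB h
    have hA' := ((isPSD_iff A).1 hA).nonneg
    have hB' := ((isPSD_iff B).1 hB).nonneg
    have h1 := CFC.sqrt_unique (hmul A hA).symm hA'
    have h2 := CFC.sqrt_unique (hmul B hB).symm hB'
    rw [h] at h1
    exact Matrix.of.injective (h1.symm.trans h2)
  have hemb := hc.continuousOn.measurableEmbedding hs.measurableSet hinj
  obtain ⟨r, hr, hrg⟩ := hemb.exists_measurable_extend (g := fun x : s => (x : Fin d → Fin d → ℝ))
    measurable_subtype_coe (fun _ => ⟨0⟩)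
  refine ⟨r, hr, fun A hA => ?_⟩
  open scoped MatrixOrder Matrix.Norms.L2Operator in
  have hex : ∃ B ∈ s, gram B = A := by
    have hA' := ((isPSD_iff A).1 hA).nonneg
    have h0 : (Matrix.of (Matrix.of.symm (CFC.sqrt (Matrix.of A)))).PosSemidef :=
      Matrix.nonneg_iff_posSemidef.1 (CFC.sqrt_nonneg (Matrix.of A))
    have hB : Matrix.of.symm (CFC.sqrt (Matrix.of A)) ∈ s := (isPSD_iff _).2 h0
    refine ⟨_, hB, Matrix.of.injective ?_⟩
    rw [hmul _ hB]
    exact CFC.sqrt_mul_sqrt_self (Matrix.of A) hA'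
  obtain ⟨B, hB, rfl⟩ := hex
  have := congrFun hrg ⟨B, hB⟩
  simp only [Function.comp, Set.domRestrict_apply] at this
  rw [this]

/-! ### Taylor expansion of a function of the smooth maximum -/

/-- `f` is a bounded continuous function with a second-order Taylor expansion: `D1`, `D2` are
bounded continuous first and second coefficients, the entries of `D2` being at most `K2`, and the
remainder is at most `K3 ‖y‖³` in the maximum norm. -/
structure HasTaylor {d : ℕ} (f : (Fin d → ℝ) → ℝ) (D1 : Fin d → (Fin d → ℝ) → ℝ)
    (D2 : Fin d → Fin d → (Fin d → ℝ) → ℝ) (K2 K3 : ℝ) : Prop where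
  cont : Continuous f
  cont1 : ∀ j, Continuous (D1 j)
  cont2 : ∀ j k, Continuous (D2 j k)
  bdd : ∃ B, ∀ x, |f x| ≤ B
  bdd1 : ∃ B, ∀ j x, |D1 j x| ≤ B
  bdd2 : ∀ j k x, |D2 j k x| ≤ K2
  taylor : ∀ x y, |f (x + y) - f x - ∑ j, D1 j x * y j
    - 1 / 2 * ∑ j, ∑ k, D2 j k x * (y j * y k)| ≤ K3 * ‖y‖ ^ 3

/-- Second-order Taylor bound on `[0, 1]`, by integrating the bound on the third derivative
three times. The
constant `M` instead of `M / 6` suffices. -/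
lemma taylor_one {φ φ1 φ2 φ3 : ℝ → ℝ} {M : ℝ} (h0 : ∀ t, HasDerivAt φ (φ1 t) t)
    (h1 : ∀ t, HasDerivAt φ1 (φ2 t) t) (h2 : ∀ t, HasDerivAt φ2 (φ3 t) t)
    (hM : ∀ t, |φ3 t| ≤ M) : |φ 1 - φ 0 - φ1 0 - 1 / 2 * φ2 0| ≤ M := by
  have hM0 : 0 ≤ M := (abs_nonneg _).trans (hM 0)
  have key : ∀ (ψ ψ' : ℝ → ℝ), (∀ t, HasDerivAt ψ (ψ' t) t) → ψ 0 = 0 →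
      (∀ t ∈ Set.Icc (0 : ℝ) 1, |ψ' t| ≤ M) → ∀ t ∈ Set.Icc (0 : ℝ) 1, |ψ t| ≤ M := by
    intro ψ ψ' hψ hz hb t ht
    have := norm_image_sub_le_of_norm_deriv_le_segment' (f := ψ) (f' := ψ') (C := M)
      (a := 0) (b := 1) (fun x _ => (hψ x).hasDerivWithinAt)
      (fun x hx => by simpa using hb x ⟨hx.1, hx.2.le⟩) t ht
    rw [hz, sub_zero, sub_zero, Real.norm_eq_abs] at this
    nlinarith [ht.1, ht.2]
  have a2 := key (fun t => φ2 t - φ2 0) φ3 (fun t => (h2 t).sub_const _) (by simp)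
    (fun t _ => hM t)
  have a1 := key (fun t => φ1 t - φ1 0 - φ2 0 * t) (fun t => φ2 t - φ2 0)
    (fun t => (((h1 t).sub_const (φ1 0)).sub ((hasDerivAt_id t).const_mul (φ2 0))).congr_deriv
      (by simp)) (by simp) a2
  have a0 := key (fun t => φ t - φ 0 - φ1 0 * t - 1 / 2 * φ2 0 * t ^ 2)
    (fun t => φ1 t - φ1 0 - φ2 0 * t)
    (fun t => by
      have := (((h0 t).sub_const (φ 0)).sub ((hasDerivAt_id t).const_mul (φ1 0))).sub
        ((hasDerivAt_pow 2 t).const_mul (1 / 2 * φ2 0))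
      refine this.congr_deriv ?_
      simp; ring) (by simp) a1
  have := a0 1 ⟨zero_le_one, le_rfl⟩
  simpa using this

/-- The weights `p_j(x) = e^{κ x_j} / Σ_l e^{κ x_l}`, which form the gradient of `smoothMax`. -/
noncomputable def softW (d : ℕ) (κ : ℝ) (x : Fin d → ℝ) (j : Fin d) : ℝ :=
  Real.exp (κ * x j) / ∑ l, Real.exp (κ * x l)

/-- The gradient of `g ∘ G_κ`. -/
noncomputable def grad (d : ℕ) (κ : ℝ) (g : ℝ → ℝ) (j : Fin d) (x : Fin d → ℝ) : ℝ :=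
  iteratedDeriv 1 g (smoothMax d κ x) * softW d κ x j

/-- The Hessian of `g ∘ G_κ`. -/
noncomputable def hess (d : ℕ) (κ : ℝ) (g : ℝ → ℝ) (j k : Fin d) (x : Fin d → ℝ) : ℝ :=
  iteratedDeriv 2 g (smoothMax d κ x) * (softW d κ x j * softW d κ x k) +
    iteratedDeriv 1 g (smoothMax d κ x) *
      (κ * ((if j = k then softW d κ x j else 0) - softW d κ x j * softW d κ x k))

section SmoothMax

variable {d : ℕ} {κ : ℝ}

lemma sum_exp_pos (hd : 0 < d) (κ : ℝ) (x : Fin d → ℝ) : 0 < ∑ l, Real.exp (κ * x l) :=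
  Finset.sum_pos (fun _ _ => Real.exp_pos _) ⟨⟨0, hd⟩, Finset.mem_univ _⟩

lemma softW_nonneg (hd : 0 < d) (x : Fin d → ℝ) (j : Fin d) : 0 ≤ softW d κ x j :=
  div_nonneg (Real.exp_pos _).le (sum_exp_pos hd κ x).le

lemma softW_le_one (hd : 0 < d) (x : Fin d → ℝ) (j : Fin d) : softW d κ x j ≤ 1 := by
  unfold softW
  rw [div_le_one (sum_exp_pos hd κ x)]
  exact Finset.single_le_sum (f := fun l => Real.exp (κ * x l))
    (fun _ _ => (Real.exp_pos _).le) (Finset.mem_univ j)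

lemma continuous_smoothMax (hd : 0 < d) : Continuous (smoothMax d κ) := by
  unfold smoothMax
  refine continuous_const.mul (Continuous.log (by fun_prop) fun x => (sum_exp_pos hd κ x).ne')

lemma continuous_softW (hd : 0 < d) (j : Fin d) : Continuous fun x => softW d κ x j := by
  unfold softW
  exact Continuous.div (by fun_prop) (by fun_prop) fun x => (sum_exp_pos hd κ x).ne'

lemma hasDerivAt_iteratedDeriv {g : ℝ → ℝ} (hg : ContDiff ℝ 3 g) {k : ℕ} (hk : k < 3) (x : ℝ) :
    HasDerivAt (iteratedDeriv k g) (iteratedDeriv (k + 1) g x) x := by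
  rw [iteratedDeriv_succ]
  exact ((hg.differentiable_iteratedDeriv k (by exact_mod_cast hk)) x).hasDerivAt

/-- Along a segment, `G_κ` is a cumulant generating function, so its first three derivatives are
`κ^{m-1}` times cumulants under the weights `p`, each of which is `O(‖y‖^m)`. -/
lemma smoothMax_taylor (hd : 0 < d) (hκ : 0 < κ) {g : ℝ → ℝ} (hg : ContDiff ℝ 3 g) {M1 M2 M3 : ℝ}
    (h1 : ∀ x, |iteratedDeriv 1 g x| ≤ M1) (h2 : ∀ x, |iteratedDeriv 2 g x| ≤ M2)
    (h3 : ∀ x, |iteratedDeriv 3 g x| ≤ M3) (x y : Fin d → ℝ) :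
    |g (smoothMax d κ (x + y)) - g (smoothMax d κ x) - ∑ j, grad d κ g j x * y j
      - 1 / 2 * ∑ j, ∑ k, hess d κ g j k x * (y j * y k)|
      ≤ 6 * (M3 + κ * M2 + κ ^ 2 * M1) * ‖y‖ ^ 3 := by
  -- `N m` is the unnormalised `m`-th moment of `y` along the segment `x + t y`
  let N : ℕ → ℝ → ℝ := fun m t => ∑ j, y j ^ m * Real.exp (κ * (x j + t * y j))
  have hN0 : ∀ t, N 0 t = ∑ j, Real.exp (κ * (x + t • y) j) := fun t => by simp [N]
  have hNpos : ∀ t, 0 < N 0 t := fun t => by rw [hN0]; exact sum_exp_pos hd _ _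
  have hNd : ∀ m t, HasDerivAt (N m) (κ * N (m + 1) t) t := by
    intro m t
    have : HasDerivAt (N m)
        (∑ j, y j ^ m * (Real.exp (κ * (x j + t * y j)) * (κ * (1 * y j)))) t := by
      refine HasDerivAt.fun_sum fun j _ => ?_
      exact ((((hasDerivAt_id t).mul_const (y j)).const_add (x j)).const_mul κ).exp.const_mul _
    refine this.congr_deriv ?_
    simp only [N, Finset.mul_sum]
    exact Finset.sum_congr rfl fun j _ => by ring
  let m : ℕ → ℝ → ℝ := fun k t => N k t / N 0 t
  have hmd : ∀ k t, HasDerivAt (m k) (κ * (m (k + 1) t - m k t * m 1 t)) t := by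
    intro k t
    refine ((hNd k t).div (hNd 0 t) (hNpos t).ne').congr_deriv ?_
    simp only [m]
    have := (hNpos t).ne'
    field_simp
  have hmb : ∀ k t, |m k t| ≤ ‖y‖ ^ k := by
    intro k t
    simp only [m]
    rw [abs_div, abs_of_pos (hNpos t), div_le_iff₀ (hNpos t)]
    simp only [N, Finset.mul_sum, pow_zero, one_mul]
    refine (Finset.abs_sum_le_sum_abs _ _).trans (Finset.sum_le_sum fun j _ => ?_)
    rw [abs_mul, abs_of_pos (Real.exp_pos _), abs_pow]
    gcongr
    exact norm_le_pi_norm y j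
  let u : ℝ → ℝ := fun t => smoothMax d κ (x + t • y)
  have hu : ∀ t, u t = κ⁻¹ * Real.log (N 0 t) := fun t => by
    simp only [u, smoothMax, hN0]
  have hud : ∀ t, HasDerivAt u (m 1 t) t := by
    intro t
    rw [show u = fun t => κ⁻¹ * Real.log (N 0 t) from funext hu]
    refine (((hNd 0 t).log (hNpos t).ne').const_mul κ⁻¹).congr_deriv ?_
    simp only [m]
    field_simp
  let c2 : ℝ → ℝ := fun t => κ * (m 2 t - m 1 t * m 1 t)
  let c3 : ℝ → ℝ := fun t => κ * (κ * (m 3 t - m 2 t * m 1 t) - (c2 t * m 1 t + m 1 t * c2 t))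
  have hc2 : ∀ t, HasDerivAt c2 (c3 t) t := fun t =>
    ((hmd 2 t).sub ((hmd 1 t).mul (hmd 1 t))).const_mul κ
  have hGd : ∀ k, k < 3 → ∀ t, HasDerivAt (fun t => iteratedDeriv k g (u t))
      (iteratedDeriv (k + 1) g (u t) * m 1 t) t := fun k hk t =>
    (hasDerivAt_iteratedDeriv hg hk (u t)).comp t (hud t)
  let Y := ‖y‖
  have hY : 0 ≤ Y := norm_nonneg y
  have b1 : ∀ t, |m 1 t| ≤ Y := fun t => by simpa using hmb 1 t
  have b2 : ∀ t, |c2 t| ≤ κ * (2 * Y ^ 2) := by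
    intro t
    simp only [c2]
    rw [abs_mul, abs_of_pos hκ]
    gcongr
    refine (abs_sub _ _).trans ?_
    have := mul_le_mul (b1 t) (b1 t) (abs_nonneg _) hY
    rw [abs_mul]
    nlinarith [hmb 2 t]
  have b3 : ∀ t, |c3 t| ≤ κ ^ 2 * (6 * Y ^ 3) := by
    intro t
    have e1 := mul_le_mul (hmb 2 t) (b1 t) (abs_nonneg _) (by positivity)
    have e2 := mul_le_mul (b2 t) (b1 t) (abs_nonneg _) (by positivity)
    have e3 := hmb 3 t
    rw [← abs_mul] at e1 e2
    simp only [c3]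
    rw [abs_mul, abs_of_pos hκ]
    have e4 : |κ * (m 3 t - m 2 t * m 1 t)| ≤ κ * (Y ^ 3 + Y ^ 2 * Y) := by
      rw [abs_mul, abs_of_pos hκ]
      gcongr
      exact (abs_sub _ _).trans (add_le_add e3 e1)
    have e5 : |c2 t * m 1 t + m 1 t * c2 t| ≤ 2 * (κ * (2 * Y ^ 2) * Y) := by
      rw [show c2 t * m 1 t + m 1 t * c2 t = 2 * (c2 t * m 1 t) by ring, abs_mul, abs_two]
      gcongr
    calc κ * |κ * (m 3 t - m 2 t * m 1 t) - (c2 t * m 1 t + m 1 t * c2 t)|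
        ≤ κ * (κ * (Y ^ 3 + Y ^ 2 * Y) + 2 * (κ * (2 * Y ^ 2) * Y)) := by
          gcongr
          exact (abs_sub _ _).trans (add_le_add e4 e5)
      _ = κ ^ 2 * (6 * Y ^ 3) := by ring
  have hG0 : ∀ t, HasDerivAt (fun t => g (u t)) (iteratedDeriv 1 g (u t) * m 1 t) t := by
    simpa using hGd 0 (by norm_num)
  have hG1 : ∀ t, HasDerivAt (fun t => iteratedDeriv 1 g (u t) * m 1 t)
      (iteratedDeriv 2 g (u t) * m 1 t * m 1 t + iteratedDeriv 1 g (u t) * c2 t) t :=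
    fun t => (hGd 1 (by norm_num) t).mul (hmd 1 t)
  have hG2 : ∀ t, HasDerivAt
      (fun t => iteratedDeriv 2 g (u t) * m 1 t * m 1 t + iteratedDeriv 1 g (u t) * c2 t)
      (iteratedDeriv 3 g (u t) * m 1 t ^ 3 + 3 * (iteratedDeriv 2 g (u t) * (m 1 t * c2 t)) +
        iteratedDeriv 1 g (u t) * c3 t) t := by
    intro t
    refine (((((hGd 2 (by norm_num) t).mul (hmd 1 t)).mul (hmd 1 t)).add
      ((hGd 1 (by norm_num) t).mul (hc2 t)))).congr_deriv ?_
    simp only [c2, Nat.reduceAdd, Pi.mul_apply]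
    ring
  have hmain := taylor_one hG0 hG1 hG2 (M := 6 * (M3 + κ * M2 + κ ^ 2 * M1) * Y ^ 3) ?_
  · have hw : ∀ j, softW d κ x j = Real.exp (κ * x j) / N 0 0 := fun j => by
      simp [softW, N]
    have hm1 : m 1 0 = ∑ j, softW d κ x j * y j := by
      simp only [m, Finset.sum_div, hw, N]
      exact Finset.sum_congr rfl fun j _ => by simp; ring
    have hm2 : m 2 0 = ∑ j, softW d κ x j * y j ^ 2 := by
      simp only [m, Finset.sum_div, hw, N]
      exact Finset.sum_congr rfl fun j _ => by simp; ring
    have hu0 : u 0 = smoothMax d κ x := by simp [u]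
    have hu1 : u 1 = smoothMax d κ (x + y) := by simp [u]
    have eg : ∑ j, grad d κ g j x * y j = iteratedDeriv 1 g (u 0) * m 1 0 := by
      rw [hm1, hu0, Finset.mul_sum]
      exact Finset.sum_congr rfl fun j _ => by rw [grad]; ring
    have eh : ∑ j, ∑ k, hess d κ g j k x * (y j * y k) =
        iteratedDeriv 2 g (u 0) * m 1 0 * m 1 0 + iteratedDeriv 1 g (u 0) * c2 0 := by
      have e1 : m 1 0 * m 1 0 =
          ∑ j, ∑ k, softW d κ x j * softW d κ x k * (y j * y k) := by
        rw [hm1, Finset.sum_mul_sum]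
        exact Finset.sum_congr rfl fun j _ => Finset.sum_congr rfl fun k _ => by ring
      have e2 : m 2 0 = ∑ j, ∑ k, (if j = k then softW d κ x j else 0) * (y j * y k) := by
        rw [hm2]
        refine Finset.sum_congr rfl fun j _ => ?_
        simp only [ite_mul, zero_mul, Finset.sum_ite_eq, Finset.mem_univ, if_true]
        ring
      simp only [c2]
      rw [mul_assoc, e1, e2, hu0, ← Finset.sum_sub_distrib, Finset.mul_sum, Finset.mul_sum,
        Finset.mul_sum, ← Finset.sum_add_distrib]
      refine Finset.sum_congr rfl fun j _ => ?_
      rw [← Finset.sum_sub_distrib, Finset.mul_sum, Finset.mul_sum, Finset.mul_sum,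
        ← Finset.sum_add_distrib]
      refine Finset.sum_congr rfl fun k _ => ?_
      rw [hess]; ring
    rw [eg, eh, ← hu0, ← hu1]
    exact hmain
  · intro t
    have hM1 : 0 ≤ M1 := (abs_nonneg _).trans (h1 0)
    have hM2 : 0 ≤ M2 := (abs_nonneg _).trans (h2 0)
    have hM3 : 0 ≤ M3 := (abs_nonneg _).trans (h3 0)
    have f1 : |iteratedDeriv 3 g (u t) * m 1 t ^ 3| ≤ M3 * Y ^ 3 := by
      rw [abs_mul, abs_pow]
      gcongr
      · exact h3 _
      · exact b1 t
    have f2 : |iteratedDeriv 2 g (u t) * (m 1 t * c2 t)| ≤ M2 * (Y * (κ * (2 * Y ^ 2))) := by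
      rw [abs_mul, abs_mul]
      gcongr
      · exact h2 _
      · exact b1 t
      · exact b2 t
    have f3 : |iteratedDeriv 1 g (u t) * c3 t| ≤ M1 * (κ ^ 2 * (6 * Y ^ 3)) := by
      rw [abs_mul]
      gcongr
      · exact h1 _
      · exact b3 t
    refine (abs_add_three _ _ _).trans ?_
    rw [abs_mul 3, abs_of_pos (three_pos : (0 : ℝ) < 3)]
    have : 0 ≤ M3 * Y ^ 3 := by positivity
    nlinarith

/-- The constants are free of the dimension: the weights `p_j` are nonnegative and sum to one. -/
lemma hasTaylor_smoothMax (hd : 0 < d) (hκ : 0 < κ) {g : ℝ → ℝ} (hg : ContDiff ℝ 3 g) {M0 M1 M2 M3 : ℝ}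
    (h0 : ∀ x, |g x| ≤ M0)
    (h1 : ∀ x, |iteratedDeriv 1 g x| ≤ M1) (h2 : ∀ x, |iteratedDeriv 2 g x| ≤ M2)
    (h3 : ∀ x, |iteratedDeriv 3 g x| ≤ M3) :
    HasTaylor (fun x => g (smoothMax d κ x)) (grad d κ g) (hess d κ g) (M2 + κ * M1)
      (6 * (M3 + κ * M2 + κ ^ 2 * M1)) := by
  have hM1 : 0 ≤ M1 := (abs_nonneg _).trans (h1 0)
  have hM2 : 0 ≤ M2 := (abs_nonneg _).trans (h2 0)
  have hG := continuous_smoothMax hd (κ := κ)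
  have hp := fun j => continuous_softW hd (κ := κ) j
  have c1 : Continuous (iteratedDeriv 1 g) := hg.continuous_iteratedDeriv 1 (by norm_num)
  have c2 : Continuous (iteratedDeriv 2 g) := hg.continuous_iteratedDeriv 2 (by norm_num)
  have p0 := fun x j => softW_nonneg hd (κ := κ) x j
  have p1 := fun x j => softW_le_one hd (κ := κ) x j
  refine ⟨hg.continuous.comp hG, fun j => ?_, fun j k => ?_, ⟨M0, fun x => h0 _⟩,
    ⟨M1, fun j x => ?_⟩, fun j k x => ?_, smoothMax_taylor hd hκ hg h1 h2 h3⟩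
  · exact (c1.comp hG).mul (hp j)
  · refine ((c2.comp hG).mul ((hp j).mul (hp k))).add ((c1.comp hG).mul
      (continuous_const.mul (Continuous.sub ?_ ((hp j).mul (hp k)))))
    split_ifs
    · exact hp j
    · exact continuous_const
  · rw [grad, abs_mul, abs_of_nonneg (p0 x j)]
    calc _ ≤ M1 * 1 := mul_le_mul (h1 _) (p1 x j) (p0 x j) hM1
      _ = M1 := mul_one _
  · rw [hess]
    have q0 : 0 ≤ softW d κ x j * softW d κ x k := mul_nonneg (p0 x j) (p0 x k)
    have q1 : softW d κ x j * softW d κ x k ≤ 1 := mul_le_one₀ (p1 x j) (p0 x k) (p1 x k)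
    have q2 : |(if j = k then softW d κ x j else 0) - softW d κ x j * softW d κ x k| ≤ 1 := by
      rw [abs_le]
      split_ifs
      · constructor <;> linarith [p0 x j, p1 x j]
      · constructor <;> linarith
    refine (abs_add_le _ _).trans (add_le_add ?_ ?_)
    · rw [abs_mul, abs_of_nonneg q0]
      calc _ ≤ M2 * 1 := mul_le_mul (h2 _) q1 q0 hM2
        _ = M2 := mul_one _
    · rw [abs_mul, abs_mul, abs_of_pos hκ]
      calc _ ≤ M1 * (κ * 1) := mul_le_mul (h1 _) (by gcongr) (by positivity) hM1
        _ = κ * M1 := by ring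

end SmoothMax

/-! ### Gaussian vectors -/

/-- The standard Gaussian measure on `ℝ^d`. -/
noncomputable def stdG (d : ℕ) : Measure (Fin d → ℝ) := Measure.pi fun _ => gaussianReal 0 1

instance (d : ℕ) : IsProbabilityMeasure (stdG d) := by unfold stdG; infer_instance

/-- The linear map `z ↦ B z`. -/
def lin {d : ℕ} (B : Fin d → Fin d → ℝ) (z : Fin d → ℝ) : Fin d → ℝ := fun j => ∑ k, B j k * z k

section Gaussian

variable {d : ℕ}

lemma continuous_lin (B : Fin d → Fin d → ℝ) : Continuous (lin B) := by
  unfold lin; fun_prop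

lemma sum_mul_lin (B : Fin d → Fin d → ℝ) (t z : Fin d → ℝ) :
    ∑ j, t j * lin B z j = ∑ k, (∑ j, t j * B j k) * z k := by
  simp only [lin, Finset.mul_sum, Finset.sum_mul]
  rw [Finset.sum_comm]
  exact Finset.sum_congr rfl fun _ _ => Finset.sum_congr rfl fun _ _ => by ring

lemma sum_sq_eq_gram (B : Fin d → Fin d → ℝ) (t : Fin d → ℝ) :
    ∑ k, (∑ j, t j * B j k) ^ 2 = ∑ j, ∑ k, t j * gram B j k * t k := by
  simp only [gram, sq, Finset.mul_sum, Finset.sum_mul]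
  rw [Finset.sum_comm]
  refine Finset.sum_congr rfl fun j _ => ?_
  rw [Finset.sum_comm]
  exact Finset.sum_congr rfl fun _ _ => Finset.sum_congr rfl fun _ _ => by ring

lemma charFun_lin (B : Fin d → Fin d → ℝ) (t : Fin d → ℝ) :
    ∫ z, Complex.exp (Complex.I * ((∑ j, t j * lin B z j : ℝ) : ℂ)) ∂(stdG d) =
      Complex.exp (((-(1 / 2) * ∑ j, ∑ k, t j * gram B j k * t k : ℝ) : ℂ)) := by
  have h1 : ∀ z : Fin d → ℝ, Complex.exp (Complex.I * ((∑ j, t j * lin B z j : ℝ) : ℂ)) =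
      ∏ k, Complex.exp (((∑ j, t j * B j k : ℝ) : ℂ) * (z k : ℂ) * Complex.I) := by
    intro z
    rw [← Complex.exp_sum, sum_mul_lin]
    push_cast
    rw [Finset.mul_sum]
    exact congrArg _ (Finset.sum_congr rfl fun k _ => by ring)
  have h2 : ∀ c : ℝ, ∫ x : ℝ, Complex.exp ((c : ℂ) * (x : ℂ) * Complex.I) ∂(gaussianReal 0 1) =
      Complex.exp (-(1 / 2) * (c : ℂ) ^ 2) := by
    intro c
    rw [← charFun_apply_real, charFun_gaussianReal]
    congr 1
    push_cast
    ring
  simp_rw [h1]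
  rw [stdG, integral_fintype_prod_eq_prod
    (f := fun k (x : ℝ) => Complex.exp (((∑ j, t j * B j k : ℝ) : ℂ) * (x : ℂ) * Complex.I))]
  simp_rw [h2]
  rw [← Complex.exp_sum, ← Finset.mul_sum, ← sum_sq_eq_gram]
  push_cast
  rfl

lemma memLp_eval (k : Fin d) (p : NNReal) : MemLp (fun z : Fin d → ℝ => z k) p (stdG d) :=
  (memLp_id_gaussianReal p).comp_measurePreserving
    (measurePreserving_eval (fun _ : Fin d => gaussianReal 0 1) k)

lemma memLp_lin (B : Fin d → Fin d → ℝ) (j : Fin d) (p : NNReal) :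
    MemLp (fun z => lin B z j) p (stdG d) := by
  unfold lin
  exact memLp_finsetSum _ fun k _ => (memLp_eval k p).const_mul _

lemma integral_eval (k : Fin d) : ∫ z, z k ∂(stdG d) = 0 := by
  have := (measurePreserving_eval (fun _ : Fin d => gaussianReal 0 1) k).map_eq
  have h : ∫ x : ℝ, x ∂(gaussianReal 0 1) = 0 := by simp
  rw [← this, integral_map (measurable_pi_apply k).aemeasurable (by fun_prop)] at h
  exact h

lemma integral_eval_mul (k l : Fin d) :
    ∫ z, z k * z l ∂(stdG d) = if k = l then 1 else 0 := by
  have hm : ∫ x : ℝ, x ∂(gaussianReal 0 1) = 0 := by simp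
  split_ifs with h
  · subst h
    have := (measurePreserving_eval (fun _ : Fin d => gaussianReal 0 1) k).map_eq
    have hv : ∫ x : ℝ, x * x ∂(gaussianReal 0 1) = 1 := by
      have := variance_eq_integral (μ := gaussianReal 0 1) (X := id) aemeasurable_id
      rw [variance_id_gaussianReal] at this
      simp only [id, hm, sub_zero, sq] at this
      simpa using this.symm
    rw [← this, integral_map (measurable_pi_apply k).aemeasurable (by fun_prop)] at hv
    exact hv
  · have := integral_fintype_prod_eq_prod (𝕜 := ℝ) (μ := fun _ : Fin d => gaussianReal 0 1)
      (f := fun i x => (if i = k then x else 1) * (if i = l then x else 1))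
    simp only [Finset.prod_mul_distrib, Finset.prod_ite_eq', Finset.mem_univ, if_true] at this
    rw [stdG, this]
    refine Finset.prod_eq_zero (Finset.mem_univ k) ?_
    simp [h, hm]

lemma integral_lin (B : Fin d → Fin d → ℝ) (j : Fin d) : ∫ z, lin B z j ∂(stdG d) = 0 := by
  unfold lin
  rw [integral_finsetSum]
  · simp [integral_const_mul, integral_eval]
  · exact fun k _ => ((memLp_eval k 1).integrable le_rfl).const_mul _

lemma integral_lin_mul (B : Fin d → Fin d → ℝ) (j k : Fin d) :
    ∫ z, lin B z j * lin B z k ∂(stdG d) = gram B j k := by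
  have hi : ∀ a b : Fin d, Integrable (fun z : Fin d → ℝ => z a * z b) (stdG d) := fun a b =>
    MemLp.integrable_mul (p := 2) (q := 2) (memLp_eval a 2) (memLp_eval b 2)
  have : ∀ z : Fin d → ℝ, lin B z j * lin B z k =
      ∑ a, ∑ b, B j a * B k b * (z a * z b) := by
    intro z
    simp only [lin, Finset.sum_mul_sum]
    exact Finset.sum_congr rfl fun _ _ => Finset.sum_congr rfl fun _ _ => by ring
  simp_rw [this]
  rw [integral_finsetSum]
  · unfold gram
    refine Finset.sum_congr rfl fun a _ => ?_
    rw [integral_finsetSum]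
    · simp [integral_const_mul, integral_eval_mul]
    · exact fun b _ => (hi a b).const_mul _
  · exact fun a _ => integrable_finsetSum _ fun b _ => (hi a b).const_mul _

lemma exp_lin_prod (B : Fin d → Fin d → ℝ) (j : Fin d) (c : ℝ) (z : Fin d → ℝ) :
    Real.exp (c * lin B z j) = ∏ k, Real.exp (c * B j k * z k) := by
  rw [← Real.exp_sum, lin, Finset.mul_sum]
  exact congrArg _ (Finset.sum_congr rfl fun k _ => by ring)

lemma integrable_exp_lin (B : Fin d → Fin d → ℝ) (j : Fin d) (c : ℝ) :
    Integrable (fun z => Real.exp (c * lin B z j)) (stdG d) := by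
  simp_rw [exp_lin_prod]
  exact Integrable.fintype_prod (f := fun k (x : ℝ) => Real.exp (c * B j k * x))
    fun k => integrable_exp_mul_gaussianReal _

lemma integral_exp_lin (B : Fin d → Fin d → ℝ) (j : Fin d) (c : ℝ) :
    ∫ z, Real.exp (c * lin B z j) ∂(stdG d) = Real.exp (c ^ 2 * gram B j j / 2) := by
  simp_rw [exp_lin_prod]
  rw [stdG, integral_fintype_prod_eq_prod (f := fun k (x : ℝ) => Real.exp (c * B j k * x))]
  have h : ∀ b : ℝ, ∫ x, Real.exp (b * x) ∂(gaussianReal 0 1) = Real.exp (b ^ 2 / 2) := by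
    intro b
    have := congrFun (mgf_id_gaussianReal (μ := 0) (v := 1)) b
    simpa [mgf] using this
  simp_rw [h]
  rw [← Real.exp_sum, gram, Finset.mul_sum, Finset.sum_div]
  exact congrArg _ (Finset.sum_congr rfl fun k _ => by ring)

lemma integrable_norm_lin_pow (B : Fin d → Fin d → ℝ) :
    Integrable (fun z => ‖lin B z‖ ^ 3) (stdG d) := by
  have : MemLp (lin B) 3 (stdG d) := memLp_pi_iff.2 fun j => memLp_lin B j 3
  exact this.integrable_norm_pow (by norm_num)

/-- Cubic growth against an exponential of rate `L`, normalised so that at `L = ln⁺ d` the factor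
`e^{-3 L / 2}` absorbs a union bound over `d` Gaussian coordinates. -/
lemma cube_le_exp {u L : ℝ} (hu : 0 ≤ u) (hL : 1 ≤ L) :
    u ^ 3 ≤ 38 * (1 + Real.exp (L * u - 3 / 2 * L)) := by
  rcases le_total u (3 / 2) with h | h
  · have : u ^ 3 ≤ (3 / 2) ^ 3 := by gcongr
    have := Real.exp_pos (L * u - 3 / 2 * L)
    norm_num at *
    linarith
  · have h1 : u - 3 / 2 ≤ L * u - 3 / 2 * L := by nlinarith
    have h2 := Real.exp_le_exp.2 h1
    have h3 := Real.pow_div_factorial_le_exp (u - 3 / 2) (by linarith) 3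
    have h4 := Real.add_one_le_exp (u - 3 / 2)
    norm_num [Nat.factorial] at h3
    have h5 : u ^ 3 ≤ 4 * ((3 / 2) ^ 3 + (u - 3 / 2) ^ 3) := by
      have : 0 ≤ u - 3 / 2 := by linarith
      nlinarith [mul_nonneg (by linarith : 0 ≤ u) (sq_nonneg (u - 3))]
    nlinarith

/-- The third moment of the maximum of a centred Gaussian vector is at most a constant times
`(σ̄² ln⁺ d)^{3/2}`, by a union bound over exponential moments. -/
lemma integral_norm_lin_le (hd : 0 < d) (B : Fin d → Fin d → ℝ) {s : ℝ}
    (hs : ∀ j, gram B j j ≤ s) :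
    ∫ z, ‖lin B z‖ ^ 3 ∂(stdG d) ≤ 114 * (s * lnPlus d) ^ ((3 : ℝ) / 2) := by
  have : Nonempty (Fin d) := ⟨⟨0, hd⟩⟩
  have hg0 : ∀ j, 0 ≤ gram B j j := fun j => Finset.sum_nonneg fun l _ => mul_self_nonneg _
  have hs0 : 0 ≤ s := (hg0 ⟨0, hd⟩).trans (hs _)
  set L := lnPlus d with hLdef
  have hL1 : 1 ≤ L := le_max_left _ _
  have hdL : (d : ℝ) ≤ Real.exp L := by
    rw [← Real.exp_log (Nat.cast_pos.2 hd : (0 : ℝ) < d)]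
    exact Real.exp_le_exp.2 (le_max_right _ _)
  rcases hs0.eq_or_lt with h0 | hpos
  · have hB : ∀ j l, B j l = 0 := by
      intro j l
      have h1 : gram B j j = 0 := le_antisymm (by rw [h0]; exact hs j) (hg0 j)
      have := (Finset.sum_eq_zero_iff_of_nonneg (fun l _ => mul_self_nonneg (B j l))).1 h1 l
        (Finset.mem_univ l)
      simpa using this
    have hz : ∀ z, lin B z = 0 := fun z => by ext j; simp [lin, hB]
    simp only [hz, norm_zero]
    simp only [ne_eq, OfNat.ofNat_ne_zero, not_false_eq_true, zero_pow, integral_zero]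
    positivity
  · set q := Real.sqrt (s * L) with hq
    have hq0 : 0 < q := Real.sqrt_pos.2 (by positivity)
    have hq2 : q ^ 2 = s * L := Real.sq_sqrt (by positivity)
    have hq3 : (s * L) ^ ((3 : ℝ) / 2) = q ^ 3 := by
      rw [hq, Real.sqrt_eq_rpow, ← Real.rpow_natCast, ← Real.rpow_mul (by positivity)]
      norm_num
    have hc2 : (L / q) ^ 2 = L / s := by
      rw [div_pow, hq2]
      field_simp
    let E : (Fin d → ℝ) → ℝ := fun z =>
      ∑ j, (Real.exp (L / q * lin B z j) + Real.exp (-(L / q) * lin B z j))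
    have hpt : ∀ z, ‖lin B z‖ ^ 3 ≤ q ^ 3 * (38 * (1 + Real.exp (-(3 / 2 * L)) * E z)) := by
      intro z
      obtain ⟨j, hj⟩ := Finite.exists_max fun j => ‖lin B z j‖
      have hn : ‖lin B z‖ ≤ |lin B z j| := (pi_norm_le_iff_of_nonneg (norm_nonneg _)).2 hj
      have h1 := cube_le_exp (u := |lin B z j| / q) (by positivity) hL1
      have h2 : Real.exp (L * (|lin B z j| / q)) ≤ E z := by
        refine le_trans ?_ (Finset.single_le_sum (f := fun j =>
          Real.exp (L / q * lin B z j) + Real.exp (-(L / q) * lin B z j))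
          (fun _ _ => by positivity) (Finset.mem_univ j))
        have e : L * (|lin B z j| / q) = L / q * |lin B z j| := by ring
        rw [e]
        rcases abs_cases (lin B z j) with ⟨h, _⟩ | ⟨h, _⟩ <;> rw [h]
        · linarith [Real.exp_pos (-(L / q) * lin B z j)]
        · rw [mul_neg, ← neg_mul]
          linarith [Real.exp_pos (L / q * lin B z j)]
      have h3 : Real.exp (L * (|lin B z j| / q) - 3 / 2 * L) ≤
          Real.exp (-(3 / 2 * L)) * E z := by
        rw [sub_eq_add_neg, Real.exp_add, mul_comm]
        gcongr
      calc ‖lin B z‖ ^ 3 ≤ |lin B z j| ^ 3 := by gcongr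
        _ = q ^ 3 * (|lin B z j| / q) ^ 3 := by field_simp
        _ ≤ q ^ 3 * (38 * (1 + Real.exp (-(3 / 2 * L)) * E z)) := by
          gcongr
          linarith
    have hEi : Integrable E (stdG d) := integrable_finsetSum _ fun j _ =>
      (integrable_exp_lin B j _).add (integrable_exp_lin B j _)
    have hEle : ∫ z, E z ∂(stdG d) ≤ 2 * Real.exp (3 / 2 * L) := by
      have hb : ∀ j, Real.exp ((L / q) ^ 2 * gram B j j / 2) ≤ Real.exp (L / 2) := by
        intro j
        apply Real.exp_le_exp.2
        rw [hc2]
        have : L / s * gram B j j ≤ L / s * s := by gcongr; exact hs j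
        rw [div_mul_cancel₀ _ hpos.ne'] at this
        linarith
      calc ∫ z, E z ∂(stdG d) = ∑ j, (Real.exp ((L / q) ^ 2 * gram B j j / 2) +
            Real.exp ((L / q) ^ 2 * gram B j j / 2)) := by
            refine (integral_finsetSum _ fun j _ =>
              (integrable_exp_lin B j _).add (integrable_exp_lin B j _)).trans ?_
            refine Finset.sum_congr rfl fun j _ => ?_
            rw [integral_add' (integrable_exp_lin B j _) (integrable_exp_lin B j _),
              integral_exp_lin, integral_exp_lin, neg_sq]
        _ ≤ ∑ _j : Fin d, (Real.exp (L / 2) + Real.exp (L / 2)) :=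
            Finset.sum_le_sum fun j _ => add_le_add (hb j) (hb j)
        _ = 2 * (d * Real.exp (L / 2)) := by simp; ring
        _ ≤ 2 * (Real.exp L * Real.exp (L / 2)) := by gcongr
        _ = 2 * Real.exp (3 / 2 * L) := by rw [← Real.exp_add]; ring_nf
    calc ∫ z, ‖lin B z‖ ^ 3 ∂(stdG d)
        ≤ ∫ z, q ^ 3 * (38 * (1 + Real.exp (-(3 / 2 * L)) * E z)) ∂(stdG d) :=
          integral_mono (integrable_norm_lin_pow B)
            ((((integrable_const 1).add (hEi.const_mul _)).const_mul 38).const_mul _) hpt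
      _ = q ^ 3 * (38 * (1 + Real.exp (-(3 / 2 * L)) * ∫ z, E z ∂(stdG d))) := by
          rw [integral_const_mul, integral_const_mul, integral_add (integrable_const _)
            (hEi.const_mul _), integral_const_mul]
          simp
      _ ≤ q ^ 3 * (38 * (1 + Real.exp (-(3 / 2 * L)) * (2 * Real.exp (3 / 2 * L)))) := by
          gcongr
      _ = 114 * (s * L) ^ ((3 : ℝ) / 2) := by
          rw [hq3, Real.exp_neg]
          field_simp
          ring

/-- Finite measures on `ℝ^d` with the same characteristic function coincide. -/
lemma measure_ext_char {ν₁ ν₂ : Measure (Fin d → ℝ)} [IsFiniteMeasure ν₁] [IsFiniteMeasure ν₂]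
    (h : ∀ t : Fin d → ℝ, ∫ x, Complex.exp (Complex.I * ((∑ j, t j * x j : ℝ) : ℂ)) ∂ν₁ =
      ∫ x, Complex.exp (Complex.I * ((∑ j, t j * x j : ℝ) : ℂ)) ∂ν₂) : ν₁ = ν₂ := by
  refine Measure.ext_of_charFunDual (funext fun l => ?_)
  have hl : ∀ x, l x = ∑ j, l (Pi.single j 1) * x j := by
    intro x
    conv_lhs => rw [← Finset.univ_sum_single x, map_sum]
    refine Finset.sum_congr rfl fun j _ => ?_
    have : Pi.single j (x j) = x j • (Pi.single j 1 : Fin d → ℝ) := by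
      rw [← Pi.single_smul]; simp
    rw [this, map_smul, smul_eq_mul, mul_comm]
  have := h fun j => l (Pi.single j 1)
  simp_rw [← hl] at this
  simpa [charFunDual_apply, mul_comm] using this

end Gaussian

/-! ### Gaussian smoothing -/

/-- The Gaussian smoothing `E f(x + B Z)` of `f`, with `Z` standard Gaussian. -/
noncomputable def smooth {d : ℕ} (f : (Fin d → ℝ) → ℝ) (x : Fin d → ℝ)
    (B : Fin d → Fin d → ℝ) : ℝ :=
  ∫ z, f (x + lin B z) ∂(stdG d)

section Smooth

variable {d : ℕ}

lemma measurable_smooth {f : (Fin d → ℝ) → ℝ} (hf : Continuous f) :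
    Measurable fun p : (Fin d → ℝ) × (Fin d → Fin d → ℝ) => smooth f p.1 p.2 := by
  have h : Continuous fun q : ((Fin d → ℝ) × (Fin d → Fin d → ℝ)) × (Fin d → ℝ) =>
      f (q.1.1 + lin q.1.2 q.2) := by
    unfold lin; fun_prop
  exact (h.stronglyMeasurable.integral_prod_right (ν := stdG d)).measurable

lemma integrable_of_bdd {α : Type*} [MeasurableSpace α] {ν : Measure α} [IsFiniteMeasure ν]
    {f : α → ℝ} (hf : Measurable f) {K : ℝ} (hK : ∀ x, |f x| ≤ K) : Integrable f ν :=
  Integrable.of_bound hf.aestronglyMeasurable K (ae_of_all _ hK)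

lemma integrable_smooth {f : (Fin d → ℝ) → ℝ} (hf : Continuous f) {K : ℝ} (hK : ∀ x, |f x| ≤ K)
    (x : Fin d → ℝ) (B : Fin d → Fin d → ℝ) :
    Integrable (fun z => f (x + lin B z)) (stdG d) :=
  integrable_of_bdd (hf.comp (continuous_const.add (continuous_lin B))).measurable fun _ => hK _

lemma abs_smooth_le {f : (Fin d → ℝ) → ℝ} {K : ℝ} (hK : ∀ x, |f x| ≤ K)
    (x : Fin d → ℝ) (B : Fin d → Fin d → ℝ) : |smooth f x B| ≤ K := by
  have := norm_integral_le_of_norm_le_const (μ := stdG d) (f := fun z => f (x + lin B z))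
    (ae_of_all _ fun z => hK _)
  simpa [smooth] using this

lemma smooth_of_gram_zero (f : (Fin d → ℝ) → ℝ) (x : Fin d → ℝ) {B : Fin d → Fin d → ℝ}
    (h : gram B = 0) : smooth f x B = f x := by
  have hB : ∀ j l, B j l = 0 := by
    intro j l
    have h1 : gram B j j = 0 := by rw [h]; rfl
    have := (Finset.sum_eq_zero_iff_of_nonneg (fun l _ => mul_self_nonneg (B j l))).1 h1 l
      (Finset.mem_univ l)
    simpa using this
  have hz : ∀ z, lin B z = 0 := fun z => by ext j; simp [lin, hB]
  simp [smooth, hz]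

/-- Independent centred Gaussian vectors add up to a Gaussian vector with the sum of the
covariances. -/
lemma map_lin_prod {B C B' : Fin d → Fin d → ℝ} (h : gram B' = gram B + gram C) :
    (stdG d).map (lin B') =
      ((stdG d).prod (stdG d)).map (fun p => lin C p.1 + lin B p.2) := by
  have m1 : Measurable (lin B') := (continuous_lin B').measurable
  have m2 : Measurable (fun p : (Fin d → ℝ) × (Fin d → ℝ) => lin C p.1 + lin B p.2) :=
    (((continuous_lin C).comp continuous_fst).add
      ((continuous_lin B).comp continuous_snd)).measurable
  have := Measure.isProbabilityMeasure_map (μ := stdG d) m1.aemeasurable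
  have := Measure.isProbabilityMeasure_map (μ := (stdG d).prod (stdG d)) m2.aemeasurable
  refine measure_ext_char fun t => ?_
  have hc : Continuous fun x : Fin d → ℝ =>
      Complex.exp (Complex.I * ((∑ j, t j * x j : ℝ) : ℂ)) := by
    refine Complex.continuous_exp.comp (continuous_const.mul (Complex.continuous_ofReal.comp ?_))
    fun_prop
  rw [integral_map m1.aemeasurable hc.aestronglyMeasurable,
    integral_map m2.aemeasurable hc.aestronglyMeasurable, charFun_lin]
  have e : ∀ p : (Fin d → ℝ) × (Fin d → ℝ),
      Complex.exp (Complex.I * ((∑ j, t j * (lin C p.1 + lin B p.2) j : ℝ) : ℂ)) =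
        Complex.exp (Complex.I * ((∑ j, t j * lin C p.1 j : ℝ) : ℂ)) *
        Complex.exp (Complex.I * ((∑ j, t j * lin B p.2 j : ℝ) : ℂ)) := by
    intro p
    rw [← Complex.exp_add, ← mul_add, ← Complex.ofReal_add, ← Finset.sum_add_distrib]
    simp only [Pi.add_apply, mul_add]
  simp_rw [e]
  rw [integral_prod_mul (f := fun z => Complex.exp (Complex.I * ((∑ j, t j * lin C z j : ℝ) : ℂ)))
    (g := fun z => Complex.exp (Complex.I * ((∑ j, t j * lin B z j : ℝ) : ℂ))),
    charFun_lin, charFun_lin, ← Complex.exp_add, ← Complex.ofReal_add, h]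
  congr 2
  simp only [Pi.add_apply, mul_add, add_mul, Finset.sum_add_distrib]
  ring

/-- Semigroup property: smoothing by covariance `gram B + gram C` is smoothing by `C Z` after
smoothing by `B Z`. -/
lemma smooth_add {f : (Fin d → ℝ) → ℝ} (hf : Continuous f) {K : ℝ} (hK : ∀ x, |f x| ≤ K)
    {B C B' : Fin d → Fin d → ℝ} (h : gram B' = gram B + gram C) (x : Fin d → ℝ) :
    smooth f x B' = ∫ z, smooth f (x + lin C z) B ∂(stdG d) := by
  have m1 : Measurable (lin B') := (continuous_lin B').measurable
  have c2 : Continuous (fun p : (Fin d → ℝ) × (Fin d → ℝ) => lin C p.1 + lin B p.2) :=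
    ((continuous_lin C).comp continuous_fst).add ((continuous_lin B).comp continuous_snd)
  have hfx : Continuous fun y => f (x + y) := hf.comp (continuous_const.add continuous_id)
  have e1 : smooth f x B' = ∫ y, f (x + y) ∂((stdG d).map (lin B')) := by
    rw [integral_map m1.aemeasurable hfx.aestronglyMeasurable, smooth]
  rw [e1, map_lin_prod h, integral_map c2.measurable.aemeasurable hfx.aestronglyMeasurable,
    integral_prod]
  · simp only [smooth, add_assoc]
  · exact integrable_of_bdd (hfx.comp c2).measurable fun _ => hK _

variable {f : (Fin d → ℝ) → ℝ} {D1 : Fin d → (Fin d → ℝ) → ℝ}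
  {D2 : Fin d → Fin d → (Fin d → ℝ) → ℝ} {K2 K3 : ℝ}

/-- Gaussian smoothing preserves the Taylor expansion, with smoothed coefficients and the same
remainder bound. -/
lemma smooth_taylor (h : HasTaylor f D1 D2 K2 K3) (x y : Fin d → ℝ) (B : Fin d → Fin d → ℝ) :
    |smooth f (x + y) B - smooth f x B - ∑ j, smooth (D1 j) x B * y j
      - 1 / 2 * ∑ j, ∑ k, smooth (D2 j k) x B * (y j * y k)| ≤ K3 * ‖y‖ ^ 3 := by
  obtain ⟨K0, hK0⟩ := h.bdd
  obtain ⟨K1, hK1⟩ := h.bdd1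
  have i0 := fun x => integrable_smooth h.cont hK0 x B
  have i1 := fun j => (integrable_smooth (h.cont1 j) (hK1 j) x B).mul_const (y j)
  have i2 := fun j k => (integrable_smooth (h.cont2 j k) (h.bdd2 j k) x B).mul_const (y j * y k)
  have s1 := integrable_finsetSum Finset.univ fun j _ => i1 j
  have s2' := fun j => integrable_finsetSum Finset.univ fun k _ => i2 j k
  have s2 := (integrable_finsetSum Finset.univ fun j _ => s2' j).const_mul (1 / 2)
  have e : smooth f (x + y) B - smooth f x B - ∑ j, smooth (D1 j) x B * y j
      - 1 / 2 * ∑ j, ∑ k, smooth (D2 j k) x B * (y j * y k) =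
      ∫ z, (f (x + y + lin B z) - f (x + lin B z) - ∑ j, D1 j (x + lin B z) * y j
        - 1 / 2 * ∑ j, ∑ k, D2 j k (x + lin B z) * (y j * y k)) ∂(stdG d) := by
    have i00 : Integrable (fun z => f (x + y + lin B z) - f (x + lin B z)) (stdG d) :=
      (i0 _).sub (i0 _)
    have i01 : Integrable (fun z => f (x + y + lin B z) - f (x + lin B z)
        - ∑ j, D1 j (x + lin B z) * y j) (stdG d) := i00.sub s1
    rw [integral_sub i01 s2, integral_sub i00 s1,
      integral_sub (i0 _) (i0 _), integral_const_mul, integral_finsetSum _ fun j _ => i1 j,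
      integral_finsetSum _ fun j _ => s2' j]
    simp only [smooth]
    simp_rw [integral_finsetSum _ fun k _ => i2 _ k, integral_mul_const]
  rw [e]
  have := norm_integral_le_of_norm_le_const (μ := stdG d)
    (f := fun z => f (x + y + lin B z) - f (x + lin B z) - ∑ j, D1 j (x + lin B z) * y j
        - 1 / 2 * ∑ j, ∑ k, D2 j k (x + lin B z) * (y j * y k)) (C := K3 * ‖y‖ ^ 3)
    (ae_of_all _ fun z => by
      have := h.taylor (x + lin B z) y
      rw [Real.norm_eq_abs, show x + y + lin B z = x + lin B z + y by abel]
      exact this)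
  simpa using this

/-- The effect of enlarging the smoothing covariance by `gram C`: integrate the Taylor expansion of
`smooth f · B` over the increment `C Z`, whose first moment vanishes and whose second is `gram C`. -/
lemma smooth_gauss (hd : 0 < d) (h : HasTaylor f D1 D2 K2 K3) (hK3 : 0 ≤ K3) (x : Fin d → ℝ)
    {B C B' : Fin d → Fin d → ℝ} (hB : gram B' = gram B + gram C) {s : ℝ}
    (hs : ∀ j, gram C j j ≤ s) :
    |smooth f x B' - smooth f x B - 1 / 2 * ∑ j, ∑ k, smooth (D2 j k) x B * gram C j k| ≤
      K3 * (114 * (s * lnPlus d) ^ ((3 : ℝ) / 2)) := by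
  obtain ⟨K0, hK0⟩ := h.bdd
  have i0 : Integrable (fun z => smooth f (x + lin C z) B) (stdG d) :=
    integrable_of_bdd ((measurable_smooth h.cont).comp
      ((continuous_const.add (continuous_lin C)).measurable.prodMk measurable_const))
      fun z => abs_smooth_le hK0 _ _
  have i1 : ∀ j, Integrable (fun z => smooth (D1 j) x B * lin C z j) (stdG d) := fun j =>
    ((memLp_lin C j 1).integrable le_rfl).const_mul _
  have i2 : ∀ j k, Integrable (fun z => smooth (D2 j k) x B * (lin C z j * lin C z k))
      (stdG d) := fun j k =>
    (MemLp.integrable_mul (p := 2) (q := 2) (memLp_lin C j 2) (memLp_lin C k 2)).const_mul _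
  have s1 := integrable_finsetSum Finset.univ fun j _ => i1 j
  have s2' := fun j => integrable_finsetSum Finset.univ fun k _ => i2 j k
  have s2 := (integrable_finsetSum Finset.univ fun j _ => s2' j).const_mul (1 / 2)
  have e : smooth f x B' - smooth f x B - 1 / 2 * ∑ j, ∑ k, smooth (D2 j k) x B * gram C j k =
      ∫ z, (smooth f (x + lin C z) B - smooth f x B - ∑ j, smooth (D1 j) x B * lin C z j
        - 1 / 2 * ∑ j, ∑ k, smooth (D2 j k) x B * (lin C z j * lin C z k)) ∂(stdG d) := by
    have i00 : Integrable (fun z => smooth f (x + lin C z) B - smooth f x B) (stdG d) :=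
      i0.sub (integrable_const _)
    have i01 : Integrable (fun z => smooth f (x + lin C z) B - smooth f x B
        - ∑ j, smooth (D1 j) x B * lin C z j) (stdG d) := i00.sub s1
    rw [integral_sub i01 s2, integral_sub i00 s1,
      integral_sub i0 (integrable_const _), integral_const_mul, integral_finsetSum _ fun j _ => i1 j,
      integral_finsetSum _ fun j _ => s2' j]
    simp_rw [integral_finsetSum _ fun k _ => i2 _ k, integral_const_mul, integral_lin_mul,
      integral_lin]
    rw [smooth_add h.cont hK0 hB]
    simp
  rw [e]
  calc _ ≤ ∫ z, K3 * ‖lin C z‖ ^ 3 ∂(stdG d) :=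
        norm_integral_le_of_norm_le (f := fun z => smooth f (x + lin C z) B - smooth f x B -
          ∑ j, smooth (D1 j) x B * lin C z j
          - 1 / 2 * ∑ j, ∑ k, smooth (D2 j k) x B * (lin C z j * lin C z k))
          ((integrable_norm_lin_pow C).const_mul _)
          (ae_of_all _ fun z => smooth_taylor h x (lin C z) B)
    _ = K3 * ∫ z, ‖lin C z‖ ^ 3 ∂(stdG d) := integral_const_mul _ _
    _ ≤ _ := by gcongr; exact integral_norm_lin_le hd C hs

end Smooth

/-! ### Conditional expectations -/

section Conditional

variable {Ω : Type*} {m m0 : MeasurableSpace Ω} {μ : Measure Ω} {d : ℕ}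

lemma abs_condExp_le_condExp {e u : Ω → ℝ} (he : Integrable e μ) (hu : Integrable u μ)
    (heu : ∀ᵐ ω ∂μ, |e ω| ≤ u ω) : ∀ᵐ ω ∂μ, |(μ[e | m]) ω| ≤ (μ[u | m]) ω := by
  have h1 : μ[e | m] ≤ᵐ[μ] μ[u | m] := condExp_mono he hu <| by
    filter_upwards [heu] with ω h using (le_abs_self _).trans h
  have h2 : μ[-e | m] ≤ᵐ[μ] μ[u | m] := condExp_mono he.neg hu <| by
    filter_upwards [heu] with ω h using (neg_le_abs _).trans h
  filter_upwards [h1, h2, condExp_neg e m (μ := μ)] with ω g1 g2 g3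
  rw [g3, Pi.neg_apply] at g2
  exact abs_le.2 ⟨by linarith, g1⟩

/-- Conditional second-moment arrays are almost surely positive semidefinite: nonnegativity of the
quadratic form on the countable set of rational vectors extends by continuity. -/
lemma isPSD_condExp {X : Ω → Fin d → ℝ} (hX : ∀ j, MemLp (fun ω => X ω j) 2 μ) :
    ∀ᵐ ω ∂μ, IsPSD fun j k => (μ[fun ω => X ω j * X ω k | m]) ω := by
  have hi : ∀ j k, Integrable (fun ω => X ω j * X ω k) μ := fun j k =>
    MemLp.integrable_mul (p := 2) (q := 2) (hX j) (hX k)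
  have hq : ∀ t : Fin d → ℚ, ∀ᵐ ω ∂μ,
      0 ≤ ∑ j, ∑ k, (t j : ℝ) * (μ[fun ω => X ω j * X ω k | m]) ω * (t k : ℝ) := by
    intro t
    have h1 : 0 ≤ᵐ[μ] μ[∑ j, ∑ k, ((t j : ℝ) * (t k : ℝ)) • fun ω => X ω j * X ω k | m] := by
      refine condExp_nonneg (ae_of_all _ fun ω => ?_)
      have : (∑ j, ∑ k, ((t j : ℝ) * (t k : ℝ)) • fun ω => X ω j * X ω k) ω =
          (∑ j, (t j : ℝ) * X ω j) * (∑ j, (t j : ℝ) * X ω j) := by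
        simp only [Finset.sum_apply, Pi.smul_apply, smul_eq_mul, Finset.sum_mul_sum]
        exact Finset.sum_congr rfl fun _ _ => Finset.sum_congr rfl fun _ _ => by ring
      rw [this]
      exact mul_self_nonneg _
    have h2 := condExp_finsetSum (μ := μ) (s := Finset.univ)
      (f := fun j => ∑ k, ((t j : ℝ) * (t k : ℝ)) • fun ω => X ω j * X ω k)
      (fun j _ => integrable_finsetSum' _ fun k _ => (hi j k).smul _) m
    have h3 := fun j => condExp_finsetSum (μ := μ) (s := Finset.univ)
      (f := fun k => ((t j : ℝ) * (t k : ℝ)) • fun ω => X ω j * X ω k)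
      (fun k _ => (hi j k).smul _) m
    have h4 := fun j k => condExp_smul (μ := μ) ((t j : ℝ) * (t k : ℝ))
      (fun ω => X ω j * X ω k) m
    filter_upwards [h1, h2, ae_all_iff.2 h3, ae_all_iff.2 fun j => ae_all_iff.2 (h4 j)]
      with ω g1 g2 g3 g4
    rw [g2, Finset.sum_apply] at g1
    simp only [g3, Finset.sum_apply, g4, Pi.smul_apply, smul_eq_mul, Pi.zero_apply] at g1
    refine g1.trans_eq ?_
    exact Finset.sum_congr rfl fun _ _ => Finset.sum_congr rfl fun _ _ => by ring
  filter_upwards [ae_all_iff.2 hq] with ω hω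
  refine ⟨fun j k => by simp only [mul_comm], fun t => ?_⟩
  have hd : DenseRange fun t : Fin d → ℚ => fun j => (t j : ℝ) :=
    DenseRange.piMap fun _ => Rat.denseRange_cast
  have hcl : IsClosed {t : Fin d → ℝ |
      0 ≤ ∑ j, ∑ k, t j * (μ[fun ω => X ω j * X ω k | m]) ω * t k} :=
    isClosed_le (by fun_prop) (by fun_prop)
  exact hd.induction_on t hcl hω

variable [IsProbabilityMeasure μ]

/-- A conditional expectation inherits any pointwise bound by a measurable function of the
conditioning `σ`-field, whether or not that function is integrable: localise to its sublevel
sets. -/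
lemma abs_condExp_le_of_measurable (hm : m ≤ m0) {e s : Ω → ℝ} (he : Integrable e μ)
    (hs : Measurable[m] s) (hes : ∀ᵐ ω ∂μ, |e ω| ≤ s ω) : ∀ᵐ ω ∂μ, |(μ[e | m]) ω| ≤ s ω := by
  have key : ∀ N : ℕ, ∀ᵐ ω ∂μ, s ω ≤ N → |(μ[e | m]) ω| ≤ s ω := by
    intro N
    let A : Set Ω := {ω | s ω ≤ N}
    have hA : MeasurableSet[m] A := measurableSet_le hs measurable_const
    have hi : Integrable (A.indicator s) μ := by
      refine Integrable.of_bound ((hs.mono hm le_rfl).indicator (hm _ hA)).aestronglyMeasurable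
        N ?_
      filter_upwards [hes] with ω hω
      by_cases h : ω ∈ A
      · rw [Set.indicator_of_mem h, Real.norm_eq_abs, abs_of_nonneg ((abs_nonneg _).trans hω)]
        exact h
      · rw [Set.indicator_of_notMem h]; simp
    have hsm : μ[A.indicator s | m] = A.indicator s :=
      condExp_of_stronglyMeasurable hm (hs.indicator hA).stronglyMeasurable hi
    have h1 : μ[A.indicator e | m] ≤ᵐ[μ] μ[A.indicator s | m] := by
      refine condExp_mono (he.indicator (hm _ hA)) hi ?_
      filter_upwards [hes] with ω hω
      exact Set.indicator_le_indicator ((le_abs_self _).trans hω)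
    have h2 : μ[A.indicator (-e) | m] ≤ᵐ[μ] μ[A.indicator s | m] := by
      refine condExp_mono (he.neg.indicator (hm _ hA)) hi ?_
      filter_upwards [hes] with ω hω
      exact Set.indicator_le_indicator ((neg_le_abs _).trans hω)
    rw [hsm] at h1 h2
    filter_upwards [h1, h2, condExp_indicator he hA, condExp_indicator he.neg hA,
      condExp_neg e m (μ := μ)] with ω g1 g2 g3 g4 g5 hω
    have hωA : ω ∈ A := hω
    rw [g3, Set.indicator_of_mem hωA, Set.indicator_of_mem hωA] at g1
    rw [g4, Set.indicator_of_mem hωA, Set.indicator_of_mem hωA, g5] at g2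
    exact abs_le.2 ⟨by simp only [Pi.neg_apply] at g2; linarith, g1⟩
  filter_upwards [ae_all_iff.2 key] with ω hω
  obtain ⟨N, hN⟩ := exists_nat_ge (s ω)
  exact hω N hN

/-- A vector whose conditional characteristic function is Gaussian with covariance `B Bᵀ` has, on
every event of the conditioning `σ`-field, the law of `B Z` with `Z` an independent standard
Gaussian; hence its conditional expectations are Gaussian smoothings. -/
lemma condExp_gaussian (hm : m ≤ m0) {T : Ω → Fin d → ℝ} (hT : Measurable T)
    {V : Ω → Fin d → Fin d → ℝ} {B : Ω → Fin d → Fin d → ℝ} (hB : Measurable[m] B)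
    (hBV : ∀ᵐ ω ∂μ, gram (B ω) = V ω)
    (hchar : ∀ t : Fin d → ℝ,
        μ[fun ω => Complex.exp (Complex.I * ((∑ j, t j * T ω j : ℝ) : ℂ)) | m]
          =ᵐ[μ] fun ω =>
            Complex.exp (((-(1 / 2) * ∑ j, ∑ k, t j * V ω j k * t k : ℝ) : ℂ)))
    {f : (Fin d → ℝ) → ℝ} (hf : Continuous f) {K : ℝ} (hK : ∀ x, |f x| ≤ K) :
    μ[fun ω => f (T ω) | m] =ᵐ[μ] fun ω => smooth f 0 (B ω) := by
  have hB0 : Measurable B := hB.mono hm le_rfl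
  have hsm : Measurable[m] fun ω => smooth f 0 (B ω) :=
    (measurable_smooth hf).comp (measurable_const.prodMk hB)
  have hfT : Integrable (fun ω => f (T ω)) μ :=
    integrable_of_bdd (hf.measurable.comp hT) fun _ => hK _
  refine (ae_eq_condExp_of_forall_setIntegral_eq hm hfT (fun s _ _ => ?_) (fun s hs _ => ?_)
    hsm.stronglyMeasurable.aestronglyMeasurable).symm
  · exact (integrable_of_bdd (hsm.mono hm le_rfl) fun _ => abs_smooth_le hK _ _).integrableOn
  · have hpair : Measurable fun p : Ω × (Fin d → ℝ) => lin (B p.1) p.2 := by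
      have hl : Continuous fun q : (Fin d → Fin d → ℝ) × (Fin d → ℝ) => lin q.1 q.2 := by
        unfold lin; fun_prop
      exact hl.measurable.comp ((hB0.comp measurable_fst).prodMk measurable_snd)
    have hc : ∀ t : Fin d → ℝ, Continuous fun x : Fin d → ℝ =>
        Complex.exp (Complex.I * ((∑ j, t j * x j : ℝ) : ℂ)) := by
      intro t
      refine Complex.continuous_exp.comp
        (continuous_const.mul (Complex.continuous_ofReal.comp ?_))
      fun_prop
    have hn : ∀ t x : Fin d → ℝ,
        ‖Complex.exp (Complex.I * ((∑ j, t j * x j : ℝ) : ℂ))‖ ≤ 1 := by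
      intro t x
      rw [mul_comm, Complex.norm_exp_ofReal_mul_I]
    have hlaw : (μ.restrict s).map T =
        ((μ.restrict s).prod (stdG d)).map fun p => lin (B p.1) p.2 := by
      refine measure_ext_char fun t => ?_
      rw [integral_map hT.aemeasurable (hc t).aestronglyMeasurable,
        integral_map hpair.aemeasurable (hc t).aestronglyMeasurable, integral_prod]
      · simp only [charFun_lin]
        have hi : Integrable
            (fun ω => Complex.exp (Complex.I * ((∑ j, t j * T ω j : ℝ) : ℂ))) μ :=
          Integrable.of_bound ((hc t).measurable.comp hT).aestronglyMeasurable 1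
            (ae_of_all _ fun ω => hn t _)
        rw [← setIntegral_condExp hm hi hs]
        refine setIntegral_congr_ae (hm _ hs) ?_
        filter_upwards [hchar t, hBV] with ω h1 h2 _
        rw [h1, h2]
      · exact Integrable.of_bound ((hc t).measurable.comp hpair).aestronglyMeasurable 1
          (ae_of_all _ fun p => hn t _)
    have e1 : ∫ ω in s, f (T ω) ∂μ = ∫ x, f x ∂((μ.restrict s).map T) :=
      (integral_map hT.aemeasurable hf.aestronglyMeasurable).symm
    rw [e1, hlaw, integral_map hpair.aemeasurable hf.aestronglyMeasurable, integral_prod]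
    · simp only [smooth, zero_add]
    · exact integrable_of_bdd (hf.measurable.comp hpair) fun _ => hK _

lemma memLp_coord {X : Ω → Fin d → ℝ} (hX : Measurable X)
    (hX3 : Integrable (fun ω => ‖X ω‖ ^ 3) μ) (j : Fin d) : MemLp (fun ω => X ω j) 2 μ := by
  have h3 : MemLp X 3 μ := by
    rw [← integrable_norm_rpow_iff hX.aestronglyMeasurable (by norm_num) (by norm_num)]
    simpa using hX3
  exact (memLp_pi_iff.1 h3 j).mono_exponent (by norm_num)

variable {G : MeasurableSpace Ω}

/-- A `G`-measurable multiple of a variable centred given `G` is centred given any smaller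
`σ`-field. -/
lemma condExp_mul_eq_zero (hmG : m ≤ G) (hG : G ≤ m0) {a Y : Ω → ℝ} (ha : Measurable[G] a)
    (haY : Integrable (fun ω => a ω * Y ω) μ) (hY : Integrable Y μ) (h0 : μ[Y | G] =ᵐ[μ] 0) :
    μ[fun ω => a ω * Y ω | m] =ᵐ[μ] 0 := by
  have h1 : μ[fun ω => a ω * Y ω | G] =ᵐ[μ] 0 := by
    filter_upwards [condExp_mul_of_stronglyMeasurable_left (m := G) ha.stronglyMeasurable haY hY,
      h0] with ω g1 g2
    rw [show (fun ω => a ω * Y ω) = a * Y from rfl, g1, Pi.mul_apply, g2]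
    simp
  have h2 := condExp_condExp_of_le (μ := μ) (f := fun ω => a ω * Y ω) hmG hG
  refine h2.symm.trans ((condExp_congr_ae h1).trans ?_)
  rw [condExp_zero]

end Conditional

/-! ### One replacement step -/

section Step

variable {Ω : Type*} {m G m0 : MeasurableSpace Ω} {μ : Measure Ω} {d : ℕ}

lemma condExp_sum_eq_zero {ι : Type*} {s : Finset ι} {f : ι → Ω → ℝ}
    (hi : ∀ i ∈ s, Integrable (f i) μ) (h0 : ∀ i ∈ s, μ[f i | m] =ᵐ[μ] 0) :
    μ[fun ω => ∑ i ∈ s, f i ω | m] =ᵐ[μ] 0 := by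
  have e : (fun ω => ∑ i ∈ s, f i ω) = ∑ i ∈ s, f i := by ext ω; rw [Finset.sum_apply]
  rw [e]
  refine (condExp_finsetSum hi m).trans ?_
  have : ∀ᵐ ω ∂μ, ∀ i ∈ s, (μ[f i | m]) ω = 0 :=
    (Finset.eventually_all s).2 h0
  filter_upwards [this] with ω hω
  rw [Finset.sum_apply, Pi.zero_apply]
  exact Finset.sum_eq_zero hω

variable [IsProbabilityMeasure μ] {f : (Fin d → ℝ) → ℝ} {D1 : Fin d → (Fin d → ℝ) → ℝ}
  {D2 : Fin d → Fin d → (Fin d → ℝ) → ℝ} {K2 K3 : ℝ}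

/-- One Lindeberg replacement: the martingale increment `X`, with past `G`, is exchanged for a
Gaussian increment having the same covariance given `m`. The first-order term and the fluctuation
of `X Xᵀ` around its `G`-conditional mean are martingale differences and disappear; what remains
are the Taylor remainders and the gap between the covariances given `G` and given `m`. -/
lemma lindeberg_step (hd : 0 < d) (h : HasTaylor f D1 D2 K2 K3) (hK3 : 0 ≤ K3) (hmG : m ≤ G)
    (hG : G ≤ m0) {X W : Ω → Fin d → ℝ} (hX : Measurable X)
    (hX3 : Integrable (fun ω => ‖X ω‖ ^ 3) μ)
    (h0 : ∀ j, μ[fun ω => X ω j | G] =ᵐ[μ] 0) (hW : Measurable[G] W)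
    {B B' C : Ω → Fin d → Fin d → ℝ} (hB : Measurable[m] B) (hB' : Measurable[m] B')
    (hBC : ∀ᵐ ω ∂μ, gram (B' ω) = gram (B ω) + gram (C ω))
    (hCS : ∀ᵐ ω ∂μ, gram (C ω) = fun j k => (μ[fun ω' => X ω' j * X ω' k | m]) ω) :
    ∀ᵐ ω ∂μ,
      |(μ[fun ω' => smooth f (W ω' + X ω') (B ω') - smooth f (W ω') (B' ω') | m]) ω| ≤
        K2 / 2 * (μ[fun ω' => ∑ j, ∑ k, |(μ[fun ω'' => X ω'' j * X ω'' k | G]) ω' -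
          (μ[fun ω'' => X ω'' j * X ω'' k | m]) ω'| | m]) ω +
        K3 * ((μ[fun ω' => ‖X ω'‖ ^ 3 | m]) ω +
          114 * ((⨆ j, (μ[fun ω' => X ω' j * X ω' j | m]) ω) * lnPlus d) ^ ((3 : ℝ) / 2)) := by
  obtain ⟨K0, hK0⟩ := h.bdd
  obtain ⟨K1, hK1⟩ := h.bdd1
  have hm : m ≤ m0 := hmG.trans hG
  have hK2 : 0 ≤ K2 := (abs_nonneg _).trans (h.bdd2 ⟨0, hd⟩ ⟨0, hd⟩ 0)
  set Q : Fin d → Fin d → Ω → ℝ := fun j k => μ[fun ω => X ω j * X ω k | G] with hQ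
  set Sg : Fin d → Fin d → Ω → ℝ := fun j k => μ[fun ω => X ω j * X ω k | m] with hSg
  have hL := memLp_coord hX hX3
  have iX : ∀ j, Integrable (fun ω => X ω j) μ := fun j => (hL j).integrable (by norm_num)
  have iXX : ∀ j k, Integrable (fun ω => X ω j * X ω k) μ := fun j k =>
    MemLp.integrable_mul (p := 2) (q := 2) (hL j) (hL k)
  have iQ : ∀ j k, Integrable (Q j k) μ := fun j k => integrable_condExp
  have iS : ∀ j k, Integrable (Sg j k) μ := fun j k => integrable_condExp
  have hBG : Measurable[G] B := hB.mono hmG le_rfl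
  have hpair : Measurable[G] fun ω => (W ω, B ω) := hW.prodMk hBG
  let a : Fin d → Ω → ℝ := fun j ω => smooth (D1 j) (W ω) (B ω)
  let b : Fin d → Fin d → Ω → ℝ := fun j k ω => smooth (D2 j k) (W ω) (B ω)
  have ha : ∀ j, Measurable[G] (a j) := fun j => (measurable_smooth (h.cont1 j)).comp hpair
  have hb : ∀ j k, Measurable[G] (b j k) := fun j k => (measurable_smooth (h.cont2 j k)).comp hpair
  have haK : ∀ j ω, |a j ω| ≤ K1 := fun j ω => abs_smooth_le (hK1 j) _ _
  have hbK : ∀ j k ω, |b j k ω| ≤ K2 := fun j k ω => abs_smooth_le (h.bdd2 j k) _ _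
  have imul : ∀ {c Y : Ω → ℝ} {K : ℝ}, Measurable[G] c → (∀ ω, |c ω| ≤ K) → Integrable Y μ →
      Integrable (fun ω => c ω * Y ω) μ := fun hc hcK hY =>
    hY.bdd_mul (hc.mono hG le_rfl).aestronglyMeasurable (ae_of_all _ hcK)
  -- the martingale part of the increment
  let M1 : Ω → ℝ := fun ω => ∑ j, a j ω * X ω j
  let M2 : Ω → ℝ := fun ω => ∑ j, ∑ k, b j k ω * (X ω j * X ω k - Q j k ω)
  have iM1 : Integrable M1 μ := integrable_finsetSum _ fun j _ => imul (ha j) (haK j) (iX j)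
  have iM2j : ∀ j, Integrable (fun ω => ∑ k, b j k ω * (X ω j * X ω k - Q j k ω)) μ := fun j =>
    integrable_finsetSum _ fun k _ => imul (hb j k) (hbK j k) ((iXX j k).sub (iQ j k))
  have iM2 : Integrable M2 μ := integrable_finsetSum _ fun j _ => iM2j j
  have zM1 : μ[M1 | m] =ᵐ[μ] 0 :=
    condExp_sum_eq_zero (fun j _ => imul (ha j) (haK j) (iX j)) fun j _ =>
      condExp_mul_eq_zero hmG hG (ha j) (imul (ha j) (haK j) (iX j)) (iX j) (h0 j)
  have zQ : ∀ j k, μ[fun ω => X ω j * X ω k - Q j k ω | G] =ᵐ[μ] 0 := by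
    intro j k
    have h1 := condExp_sub (μ := μ) (iXX j k) (iQ j k) G
    have h2 : μ[Q j k | G] = Q j k :=
      condExp_of_stronglyMeasurable hG stronglyMeasurable_condExp (iQ j k)
    refine h1.trans ?_
    rw [h2, hQ]
    simp
  have zM2 : μ[M2 | m] =ᵐ[μ] 0 :=
    condExp_sum_eq_zero (fun j _ => iM2j j) fun j _ =>
      condExp_sum_eq_zero (fun k _ => imul (hb j k) (hbK j k) ((iXX j k).sub (iQ j k)))
        fun k _ => condExp_mul_eq_zero hmG hG (hb j k)
          (imul (hb j k) (hbK j k) ((iXX j k).sub (iQ j k))) ((iXX j k).sub (iQ j k)) (zQ j k)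
  -- the Taylor remainder of the Gaussian increment
  let e : Ω → ℝ := fun ω => smooth f (W ω) (B' ω) - smooth f (W ω) (B ω) -
    1 / 2 * ∑ j, ∑ k, b j k ω * Sg j k ω
  have isB : Integrable (fun ω => smooth f (W ω) (B ω)) μ :=
    integrable_of_bdd (((measurable_smooth h.cont).comp hpair).mono hG le_rfl)
      fun _ => abs_smooth_le hK0 _ _
  have isB' : Integrable (fun ω => smooth f (W ω) (B' ω)) μ :=
    integrable_of_bdd (((measurable_smooth h.cont).comp
      (hW.prodMk (hB'.mono hmG le_rfl))).mono hG le_rfl) fun _ => abs_smooth_le hK0 _ _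
  have isX : Integrable (fun ω => smooth f (W ω + X ω) (B ω)) μ :=
    integrable_of_bdd ((measurable_smooth h.cont).comp
      (((hW.mono hG le_rfl).add hX).prodMk (hB.mono hm le_rfl))) fun _ => abs_smooth_le hK0 _ _
  have ibS : Integrable (fun ω => ∑ j, ∑ k, b j k ω * Sg j k ω) μ :=
    integrable_finsetSum _ fun j _ => integrable_finsetSum _ fun k _ =>
      imul (hb j k) (hbK j k) (iS j k)
  have ie : Integrable e μ := (isB'.sub isB).sub (ibS.const_mul _)
  let s : Ω → ℝ := fun ω => ⨆ j, Sg j j ω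
  have hs : Measurable[m] s :=
    Measurable.iSup fun j => (stronglyMeasurable_condExp (m := m)).measurable
  have hes : ∀ᵐ ω ∂μ, |e ω| ≤ K3 * (114 * (s ω * lnPlus d) ^ ((3 : ℝ) / 2)) := by
    filter_upwards [hBC, hCS] with ω g1 g2
    have g3 : ∀ j k, gram (C ω) j k = Sg j k ω := fun j k => by rw [g2]
    have := smooth_gauss hd h hK3 (W ω) g1 (s := s ω) fun j => by
      rw [g3]
      exact le_ciSup (f := fun j => Sg j j ω) (Set.finite_range _).bddAbove j
    simp only [g3] at this
    exact this
  have be := abs_condExp_le_of_measurable hm ie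
    (((hs.mul_const (lnPlus d)).pow_const ((3 : ℝ) / 2)).const_mul 114 |>.const_mul K3) hes
  -- the Taylor remainder of `X` together with the covariance gap
  let q : Ω → ℝ := fun ω => ∑ j, ∑ k, |Q j k ω - Sg j k ω|
  have iq : Integrable q μ := integrable_finsetSum _ fun j _ => integrable_finsetSum _ fun k _ =>
    ((iQ j k).sub (iS j k)).abs
  let u : Ω → ℝ := fun ω => smooth f (W ω + X ω) (B ω) - smooth f (W ω) (B' ω) + e ω -
    M1 ω - 1 / 2 * M2 ω
  have iu : Integrable u μ := (((isX.sub isB').add ie).sub iM1).sub (iM2.const_mul _)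
  have hu : ∀ ω, |u ω| ≤ K2 / 2 * q ω + K3 * ‖X ω‖ ^ 3 := by
    intro ω
    have t1 := smooth_taylor h (W ω) (X ω) (B ω)
    have t2 : |∑ j, ∑ k, b j k ω * (Q j k ω - Sg j k ω)| ≤ K2 * q ω := by
      simp only [q, Finset.mul_sum]
      refine (Finset.abs_sum_le_sum_abs _ _).trans (Finset.sum_le_sum fun j _ =>
        (Finset.abs_sum_le_sum_abs _ _).trans (Finset.sum_le_sum fun k _ => ?_))
      rw [abs_mul]
      exact mul_le_mul_of_nonneg_right (hbK j k ω) (abs_nonneg _)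
    have t3 : u ω = (smooth f (W ω + X ω) (B ω) - smooth f (W ω) (B ω) -
        ∑ j, a j ω * X ω j - 1 / 2 * ∑ j, ∑ k, b j k ω * (X ω j * X ω k)) +
        1 / 2 * ∑ j, ∑ k, b j k ω * (Q j k ω - Sg j k ω) := by
      simp only [u, e, M1, M2, mul_sub, Finset.sum_sub_distrib]
      ring
    rw [t3]
    refine (abs_add_le _ _).trans ?_
    rw [abs_mul (1 / 2 : ℝ), abs_of_pos (by norm_num : (0 : ℝ) < 1 / 2)]
    linarith
  have bu := abs_condExp_le_condExp (m := m) iu ((iq.const_mul (K2 / 2)).add (hX3.const_mul K3))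
    (ae_of_all _ hu)
  have c1 := condExp_add (μ := μ) (iq.const_mul (K2 / 2)) (hX3.const_mul K3) m
  have c2 := condExp_smul (μ := μ) (K2 / 2) q m
  have c3 := condExp_smul (μ := μ) K3 (fun ω => ‖X ω‖ ^ 3) m
  have d1 : (fun ω => smooth f (W ω + X ω) (B ω) - smooth f (W ω) (B' ω)) =
      u + (M1 + ((1 / 2 : ℝ) • M2 - e)) := by
    ext ω
    simp only [u, Pi.add_apply, Pi.sub_apply, Pi.smul_apply, smul_eq_mul]
    ring
  have d2 := condExp_add (μ := μ) iu (iM1.add ((iM2.smul (1 / 2 : ℝ)).sub ie)) m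
  have d3 := condExp_add (μ := μ) iM1 ((iM2.smul (1 / 2 : ℝ)).sub ie) m
  have d4 := condExp_sub (μ := μ) (iM2.smul (1 / 2 : ℝ)) ie m
  have d5 := condExp_smul (μ := μ) (1 / 2 : ℝ) M2 m
  rw [d1]
  filter_upwards [zM1, zM2, be, bu, c1, c2, c3, d2, d3, d4, d5]
    with ω z1 z2 be bu c1 c2 c3 d2 d3 d4 d5
  rw [d2, Pi.add_apply, d3, Pi.add_apply, d4, Pi.sub_apply, d5, Pi.smul_apply, z1, z2]
  have c1' : (μ[(fun ω => K2 / 2 * q ω) + fun ω => K3 * ‖X ω‖ ^ 3 | m]) ω =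
      K2 / 2 * (μ[q | m]) ω + K3 * (μ[fun ω => ‖X ω‖ ^ 3 | m]) ω := by
    rw [c1, Pi.add_apply]
    exact congrArg₂ (· + ·) c2 c3
  have bu' := bu.trans_eq c1'
  simp only [Pi.zero_apply, smul_zero, zero_add, zero_sub]
  refine (abs_add_le _ _).trans ?_
  rw [abs_neg, mul_add K3]
  exact (add_le_add bu' be).trans_eq (by ring)

end Step

/-! ### Orthogonality and the telescoping sum -/

section Lindeberg

lemma IsPSD.sum {d : ℕ} {ι : Type*} {s : Finset ι} {A : ι → Fin d → Fin d → ℝ}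
    (h : ∀ i ∈ s, IsPSD (A i)) : IsPSD (∑ i ∈ s, A i) := by
  refine ⟨fun j k => ?_, fun t => ?_⟩
  · simp only [Finset.sum_apply]
    exact Finset.sum_congr rfl fun i hi => (h i hi).1 j k
  · have e : ∑ j, ∑ k, t j * (∑ i ∈ s, A i) j k * t k =
        ∑ i ∈ s, ∑ j, ∑ k, t j * A i j k * t k := by
      simp only [Finset.sum_apply, Finset.mul_sum, Finset.sum_mul]
      rw [Finset.sum_comm (s := s)]
      refine Finset.sum_congr rfl fun j _ => ?_
      rw [Finset.sum_comm (s := s)]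
    rw [e]
    exact Finset.sum_nonneg fun i hi => (h i hi).2 t

variable {Ω : Type*} {m0 : MeasurableSpace Ω} {μ : Measure Ω} [IsProbabilityMeasure μ] {d n : ℕ}
  {F : ℕ → MeasurableSpace Ω} {X : ℕ → Ω → Fin d → ℝ}

/-- Orthogonality of martingale differences: the conditional covariance of the sum is the sum of
the conditional covariances. -/
lemma condExp_sum_mul_sum (hF : Monotone F) (hF0 : ∀ k, F k ≤ m0)
    (hXF : ∀ i ∈ Finset.Icc 1 n, Measurable[F i] (X i))
    (hmart : ∀ i ∈ Finset.Icc 1 n, ∀ j, μ[fun ω => X i ω j | F (i - 1)] =ᵐ[μ] 0)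
    (hX3 : ∀ i ∈ Finset.Icc 1 n, Integrable (fun ω => ‖X i ω‖ ^ 3) μ) (j k : Fin d) :
    μ[fun ω => (∑ i ∈ Finset.Icc 1 n, X i ω j) * (∑ i ∈ Finset.Icc 1 n, X i ω k) | F 0]
      =ᵐ[μ] fun ω => ∑ i ∈ Finset.Icc 1 n, (μ[fun ω' => X i ω' j * X i ω' k | F 0]) ω := by
  have hL : ∀ i ∈ Finset.Icc 1 n, ∀ j, MemLp (fun ω => X i ω j) 2 μ := fun i hi =>
    memLp_coord ((hXF i hi).mono (hF0 i) le_rfl) (hX3 i hi)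
  have hi2 : ∀ i ∈ Finset.Icc 1 n, ∀ l ∈ Finset.Icc 1 n, ∀ j k,
      Integrable (fun ω => X i ω j * X l ω k) μ := fun i hi l hl j k =>
    MemLp.integrable_mul (p := 2) (q := 2) (hL i hi j) (hL l hl k)
  have hlt : ∀ i ∈ Finset.Icc 1 n, ∀ l ∈ Finset.Icc 1 n, i < l → ∀ j k,
      μ[fun ω => X i ω j * X l ω k | F 0] =ᵐ[μ] 0 := by
    intro i hi l hl hil j k
    have hXi : Measurable[F (l - 1)] (X i) := (hXF i hi).mono (hF (by omega)) le_rfl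
    have hXij : Measurable[F (l - 1)] fun ω => X i ω j := (measurable_pi_apply j).comp hXi
    exact condExp_mul_eq_zero (hF (Nat.zero_le _)) (hF0 _) hXij (hi2 i hi l hl j k)
      ((hL l hl k).integrable (by norm_num)) (hmart l hl k)
  have hoff : ∀ i ∈ Finset.Icc 1 n, ∀ l ∈ (Finset.Icc 1 n).erase i,
      μ[fun ω => X i ω j * X l ω k | F 0] =ᵐ[μ] 0 := by
    intro i hi l hl
    obtain ⟨hne, hl⟩ := Finset.mem_erase.1 hl
    rcases lt_or_gt_of_ne hne with h | h
    · simpa only [mul_comm] using hlt l hl i hi h k j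
    · exact hlt i hi l hl h j k
  have iO : ∀ i ∈ Finset.Icc 1 n,
      Integrable (fun ω => ∑ l ∈ (Finset.Icc 1 n).erase i, X i ω j * X l ω k) μ := fun i hi =>
    integrable_finsetSum _ fun l hl => hi2 i hi l (Finset.mem_of_mem_erase hl) j k
  have zO : μ[fun ω => ∑ i ∈ Finset.Icc 1 n, ∑ l ∈ (Finset.Icc 1 n).erase i, X i ω j * X l ω k
      | F 0] =ᵐ[μ] 0 :=
    condExp_sum_eq_zero iO fun i hi =>
      condExp_sum_eq_zero (fun l hl => hi2 i hi l (Finset.mem_of_mem_erase hl) j k) (hoff i hi)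
  have e : (fun ω => (∑ i ∈ Finset.Icc 1 n, X i ω j) * (∑ i ∈ Finset.Icc 1 n, X i ω k)) =
      (∑ i ∈ Finset.Icc 1 n, fun ω => X i ω j * X i ω k) +
        fun ω => ∑ i ∈ Finset.Icc 1 n, ∑ l ∈ (Finset.Icc 1 n).erase i, X i ω j * X l ω k := by
    ext ω
    rw [Pi.add_apply, Finset.sum_apply, Finset.sum_mul_sum, ← Finset.sum_add_distrib]
    exact Finset.sum_congr rfl fun i hi => (Finset.add_sum_erase _ _ hi).symm
  rw [e]
  have d1 := condExp_add (μ := μ) (integrable_finsetSum' _ fun i hi => hi2 i hi i hi j k)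
    (integrable_finsetSum _ iO) (F 0)
  have d2 := condExp_finsetSum (μ := μ) (fun i hi => hi2 i hi i hi j k) (F 0)
  filter_upwards [d1, d2, zO] with ω d1 d2 z
  rw [d1, Pi.add_apply, d2, z, Finset.sum_apply, Pi.zero_apply, add_zero]

variable {f : (Fin d → ℝ) → ℝ} {D1 : Fin d → (Fin d → ℝ) → ℝ}
  {D2 : Fin d → Fin d → (Fin d → ℝ) → ℝ} {K2 K3 : ℝ}

/-- The Lindeberg bound for a general test function with a Taylor expansion: the increments are
replaced by Gaussian ones from the last to the first. After the increments `k + 1, …, n` have been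
replaced, their total covariance given `F 0` is the Gaussian smoothing parameter `R k`. -/
lemma lindeberg_bound (hd : 0 < d) (h : HasTaylor f D1 D2 K2 K3) (hK3 : 0 ≤ K3)
    (hF : Monotone F) (hF0 : ∀ k, F k ≤ m0)
    (hXF : ∀ i ∈ Finset.Icc 1 n, Measurable[F i] (X i))
    (hmart : ∀ i ∈ Finset.Icc 1 n, ∀ j, μ[fun ω => X i ω j | F (i - 1)] =ᵐ[μ] 0)
    (hX3 : ∀ i ∈ Finset.Icc 1 n, Integrable (fun ω => ‖X i ω‖ ^ 3) μ)
    {V : Ω → Fin d → Fin d → ℝ} {T : Ω → Fin d → ℝ}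
    (hV : ∀ j k, (fun ω => V ω j k) =ᵐ[μ]
        μ[fun ω => (∑ i ∈ Finset.Icc 1 n, X i ω j) * (∑ i ∈ Finset.Icc 1 n, X i ω k) | F 0])
    (hT : Measurable T)
    (hchar : ∀ t : Fin d → ℝ,
        μ[fun ω => Complex.exp (Complex.I * ((∑ j, t j * T ω j : ℝ) : ℂ)) | F 0]
          =ᵐ[μ] fun ω =>
            Complex.exp (((-(1 / 2) * ∑ j, ∑ k, t j * V ω j k * t k : ℝ) : ℂ))) :
    ∀ᵐ ω ∂μ,
      |(μ[fun ω' => f (fun j => ∑ i ∈ Finset.Icc 1 n, X i ω' j) - f (T ω') | F 0]) ω| ≤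
        ∑ i ∈ Finset.Icc 1 n,
          (K2 / 2 * (μ[fun ω' => ∑ j, ∑ k, |(μ[fun ω'' => X i ω'' j * X i ω'' k | F (i - 1)]) ω' -
            (μ[fun ω'' => X i ω'' j * X i ω'' k | F 0]) ω'| | F 0]) ω +
          K3 * ((μ[fun ω' => ‖X i ω'‖ ^ 3 | F 0]) ω +
            114 * ((⨆ j, (μ[fun ω' => X i ω' j * X i ω' j | F 0]) ω) * lnPlus d) ^
              ((3 : ℝ) / 2))) := by
  obtain ⟨K0, hK0⟩ := h.bdd
  obtain ⟨r, hr, hgr⟩ := exists_measurable_sqrt d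
  have hXm : ∀ i ∈ Finset.Icc 1 n, Measurable (X i) := fun i hi => (hXF i hi).mono (hF0 i) le_rfl
  let Sg : ℕ → Ω → Fin d → Fin d → ℝ := fun i ω j k =>
    (μ[fun ω' => X i ω' j * X i ω' k | F 0]) ω
  let R : ℕ → Ω → Fin d → Fin d → ℝ := fun k ω => ∑ i ∈ Finset.Ioc k n, Sg i ω
  let W : ℕ → Ω → Fin d → ℝ := fun k ω j => ∑ i ∈ Finset.Icc 1 k, X i ω j
  have hSg : ∀ i, Measurable[F 0] (Sg i) := fun i =>
    @measurable_pi_lambda _ _ _ (F 0) _ _ fun j => @measurable_pi_lambda _ _ _ (F 0) _ _ fun k =>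
      (stronglyMeasurable_condExp (m := F 0)).measurable
  have hR : ∀ k, Measurable[F 0] (R k) := fun k => Finset.measurable_fun_sum _ fun i _ => hSg i
  have hB : ∀ k, Measurable[F 0] fun ω => r (R k ω) := fun k => hr.comp (hR k)
  have hW : ∀ k ≤ n, Measurable[F k] (W k) := by
    intro k hk
    refine @measurable_pi_lambda _ _ _ (F k) _ _ fun j => ?_
    refine Finset.measurable_fun_sum _ fun i hi => ?_
    rw [Finset.mem_Icc] at hi
    exact (measurable_pi_apply j).comp
      ((hXF i (Finset.mem_Icc.2 ⟨hi.1, hi.2.trans hk⟩)).mono (hF hi.2) le_rfl)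
  have hpsd : ∀ᵐ ω ∂μ, ∀ i ∈ Finset.Icc 1 n, IsPSD (Sg i ω) :=
    (Finset.eventually_all _).2 fun i hi => isPSD_condExp (memLp_coord (hXm i hi) (hX3 i hi))
  have hgR : ∀ᵐ ω ∂μ, ∀ k, gram (r (R k ω)) = R k ω := by
    filter_upwards [hpsd] with ω hω k
    refine hgr _ (IsPSD.sum fun i hi => hω i ?_)
    rw [Finset.mem_Ioc] at hi
    exact Finset.mem_Icc.2 ⟨by omega, hi.2⟩
  let φ : ℕ → Ω → ℝ := fun k ω => smooth f (W k ω) (r (R k ω))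
  have iφ : ∀ k ≤ n, Integrable (φ k) μ := fun k hk =>
    integrable_of_bdd ((measurable_smooth h.cont).comp
      (((hW k hk).mono (hF0 k) le_rfl).prodMk ((hB k).mono (hF0 0) le_rfl)))
      fun _ => abs_smooth_le hK0 _ _
  have hstep : ∀ k ∈ Finset.range n, ∀ᵐ ω ∂μ, |(μ[φ (k + 1) - φ k | F 0]) ω| ≤
      K2 / 2 * (μ[fun ω' => ∑ j, ∑ l,
          |(μ[fun ω'' => X (k + 1) ω'' j * X (k + 1) ω'' l | F (k + 1 - 1)]) ω' -
            (μ[fun ω'' => X (k + 1) ω'' j * X (k + 1) ω'' l | F 0]) ω'| | F 0]) ω +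
        K3 * ((μ[fun ω' => ‖X (k + 1) ω'‖ ^ 3 | F 0]) ω +
          114 * ((⨆ j, (μ[fun ω' => X (k + 1) ω' j * X (k + 1) ω' j | F 0]) ω) * lnPlus d) ^
            ((3 : ℝ) / 2)) := by
    intro k hk
    rw [Finset.mem_range] at hk
    have hi : k + 1 ∈ Finset.Icc 1 n := Finset.mem_Icc.2 ⟨by omega, by omega⟩
    have hCg : ∀ᵐ ω ∂μ, gram (r (Sg (k + 1) ω)) = Sg (k + 1) ω := by
      filter_upwards [hpsd] with ω hω using hgr _ (hω _ hi)
    have hBC : ∀ᵐ ω ∂μ, gram (r (R k ω)) = gram (r (R (k + 1) ω)) + gram (r (Sg (k + 1) ω)) := by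
      filter_upwards [hgR, hCg] with ω g1 g2
      rw [g1, g1, g2]
      have : Finset.Ioc k n = insert (k + 1) (Finset.Ioc (k + 1) n) := by
        ext i; simp only [Finset.mem_Ioc, Finset.mem_insert]; omega
      simp only [R]
      rw [this, Finset.sum_insert (by simp), add_comm]
    have hWs : ∀ ω, W (k + 1) ω = W k ω + X (k + 1) ω := by
      intro ω
      ext j
      exact Finset.sum_Icc_succ_top (by omega) _
    have := lindeberg_step hd h hK3 (hF (Nat.zero_le k)) (hF0 k) (hXm _ hi) (hX3 _ hi)
      (fun j => hmart _ hi j) (hW k hk.le) (hB (k + 1)) (hB k) hBC hCg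
    simp only [← hWs] at this
    exact this
  -- the two ends of the telescope
  have hend : ∀ᵐ ω ∂μ, φ n ω = f (fun j => ∑ i ∈ Finset.Icc 1 n, X i ω j) := by
    filter_upwards [hgR] with ω hω
    refine smooth_of_gram_zero f _ ?_
    rw [hω]
    simp [R]
  have hVR : ∀ᵐ ω ∂μ, gram (r (R 0 ω)) = V ω := by
    have h1 : ∀ᵐ ω ∂μ, ∀ j k, V ω j k =
        ∑ i ∈ Finset.Icc 1 n, (μ[fun ω' => X i ω' j * X i ω' k | F 0]) ω :=
      ae_all_iff.2 fun j => ae_all_iff.2 fun k =>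
        (hV j k).trans (condExp_sum_mul_sum hF hF0 hXF hmart hX3 j k)
    filter_upwards [hgR, h1] with ω g1 g2
    rw [g1]
    ext j k
    rw [g2]
    simp only [R, Sg, Finset.sum_apply]
    rfl
  have hφ0 : φ 0 = fun ω => smooth f 0 (r (R 0 ω)) := by
    ext ω
    have : W 0 ω = 0 := by ext j; simp [W]
    simp only [φ, this]
  have hT0 := condExp_gaussian (hF0 0) hT (hB 0) hVR hchar h.cont hK0
  have hφF : μ[φ 0 | F 0] = φ 0 := by
    refine condExp_of_stronglyMeasurable (hF0 0) ?_ (iφ 0 (Nat.zero_le _))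
    exact ((measurable_smooth h.cont).comp ((hW 0 (Nat.zero_le _)).prodMk (hB 0))).stronglyMeasurable
  have ifT : Integrable (fun ω => f (T ω)) μ :=
    integrable_of_bdd (h.cont.measurable.comp hT) fun _ => hK0 _
  have d1 : μ[fun ω => f (fun j => ∑ i ∈ Finset.Icc 1 n, X i ω j) - f (T ω) | F 0] =ᵐ[μ]
      μ[φ n - fun ω => f (T ω) | F 0] := condExp_congr_ae <| by
    filter_upwards [hend] with ω hω
    rw [Pi.sub_apply, hω]
  have d2 := condExp_sub (μ := μ) (iφ n le_rfl) ifT (F 0)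
  have d3 := condExp_sub (μ := μ) (iφ n le_rfl) (iφ 0 (Nat.zero_le _)) (F 0)
  have d4 := condExp_finsetSum (μ := μ) (s := Finset.range n) (f := fun k => φ (k + 1) - φ k)
    (fun k hk => by
      rw [Finset.mem_range] at hk
      exact (iφ (k + 1) hk).sub (iφ k hk.le)) (F 0)
  rw [Finset.sum_range_sub] at d4
  filter_upwards [d1, d2, d3, d4, hT0, (Finset.eventually_all _).2 hstep] with ω d1 d2 d3 d4 hT0 hst
  have e1 : (μ[fun ω => f (fun j => ∑ i ∈ Finset.Icc 1 n, X i ω j) - f (T ω) | F 0]) ω =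
      ∑ k ∈ Finset.range n, (μ[φ (k + 1) - φ k | F 0]) ω := by
    rw [d1, d2, Pi.sub_apply, hT0, ← Finset.sum_apply, ← d4, d3, Pi.sub_apply, hφF, hφ0]
  rw [e1]
  have e2 : Finset.Icc 1 n = (Finset.range n).map ⟨(· + 1), add_left_injective 1⟩ := by
    ext i
    simp only [Finset.mem_Icc, Finset.mem_map, Finset.mem_range, Function.Embedding.coeFn_mk]
    exact ⟨fun h => ⟨i - 1, by omega, by omega⟩, fun ⟨a, h1, h2⟩ => by omega⟩
  rw [e2, Finset.sum_map]
  exact (Finset.abs_sum_le_sum_abs _ _).trans (Finset.sum_le_sum hst)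

end Lindeberg

/-- **Smoothed comparison of a martingale sum with its Gaussian analogue.**
There is a universal constant `C > 0` such that for every `ℝ^d`-valued martingale
difference sequence `{X_i}_{i=1}^n` adapted to `{F_i}` with `E[X_1 | F_0] = 0` and
finite conditional third moments, `S = Σ_{i≤n} X_i`, `T` conditionally `N(0, V)` given
`F_0` (with `V` a version of `E[S Sᵀ | F_0]`), every `g ∈ C_b³(ℝ)`, and every `κ > 0`,
almost surely
`|E[g(G_κ(S)) − g(G_κ(T)) | F_0]| ≤ C[(‖g''‖ + κ‖g'‖)β + (‖g'''‖ + κ‖g''‖ + κ²‖g'‖)Γ]`,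
where `β = Σ_i E[‖E[X_i X_iᵀ | F_{i−1}] − Σ_i‖_{e,1} | F_0]` and
`Γ = Σ_i (E[‖X_i‖_∞³ | F_0] + (σ̄_i² ln⁺ d)^{3/2})`. -/
theorem stmt_14 :
    ∃ C : ℝ, 0 < C ∧
    ∀ (d n : ℕ), 0 < d → 0 < n →
    ∀ (Ω : Type) [m0 : MeasurableSpace Ω] (μ : Measure Ω) [IsProbabilityMeasure μ]
      (F : ℕ → MeasurableSpace Ω) (X : ℕ → Ω → Fin d → ℝ)
      (Sigm : ℕ → Ω → Fin d → Fin d → ℝ)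
      (V : Ω → Fin d → Fin d → ℝ) (T : Ω → Fin d → ℝ) (g : ℝ → ℝ),
      Monotone F → (∀ k, F k ≤ m0) →
      (∀ i ∈ Finset.Icc 1 n, Measurable[F i] (X i)) →
      (∀ i ∈ Finset.Icc 1 n, ∀ j, μ[fun ω => X i ω j | F (i - 1)] =ᵐ[μ] 0) →
      (∀ i ∈ Finset.Icc 1 n, Integrable (fun ω => ‖X i ω‖ ^ 3) μ) →
      (∀ i ∈ Finset.Icc 1 n, ∀ j k,
        (fun ω => Sigm i ω j k) =ᵐ[μ] μ[fun ω => X i ω j * X i ω k | F 0]) →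
      (∀ j k, (fun ω => V ω j k) =ᵐ[μ]
        μ[fun ω => (∑ i ∈ Finset.Icc 1 n, X i ω j) * (∑ i ∈ Finset.Icc 1 n, X i ω k)
          | F 0]) →
      Measurable T →
      (∀ t : Fin d → ℝ,
        μ[fun ω => Complex.exp (Complex.I * ((∑ j, t j * T ω j : ℝ) : ℂ)) | F 0]
          =ᵐ[μ] fun ω =>
            Complex.exp (((-(1 / 2) * ∑ j, ∑ k, t j * V ω j k * t k : ℝ) : ℂ))) →
      ContDiff ℝ 3 g →
      (∀ k : ℕ, k ≤ 3 → ∃ B : ℝ, ∀ x : ℝ, |iteratedDeriv k g x| ≤ B) →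
      ∀ κ : ℝ, 0 < κ →
      ∀ᵐ ω ∂μ,
        |(μ[fun ω' =>
              g (smoothMax d κ (fun j => ∑ i ∈ Finset.Icc 1 n, X i ω' j)) -
                g (smoothMax d κ (T ω')) | F 0]) ω| ≤
          C * (((⨆ x : ℝ, |iteratedDeriv 2 g x|) + κ * (⨆ x : ℝ, |iteratedDeriv 1 g x|)) *
                (∑ i ∈ Finset.Icc 1 n,
                  (μ[fun ω' => ∑ j, ∑ k,
                      |(μ[fun ω'' => X i ω'' j * X i ω'' k | F (i - 1)]) ω' -
                        Sigm i ω' j k| | F 0]) ω) +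
              ((⨆ x : ℝ, |iteratedDeriv 3 g x|) + κ * (⨆ x : ℝ, |iteratedDeriv 2 g x|) +
                  κ ^ 2 * (⨆ x : ℝ, |iteratedDeriv 1 g x|)) *
                (∑ i ∈ Finset.Icc 1 n,
                  ((μ[fun ω' => ‖X i ω'‖ ^ 3 | F 0]) ω +
                    ((⨆ j, Sigm i ω j j) * lnPlus d) ^ ((3 : ℝ) / 2)))) := by
  refine ⟨684, by norm_num, ?_⟩
  intro d n hd _ Ω m0 μ _ F X Sigm V T g hF hF0 hXF hmart hX3 hSigm hV hT hchar hg hbdd κ hκ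
  have hM : ∀ k ≤ 3, ∀ x, |iteratedDeriv k g x| ≤ ⨆ x, |iteratedDeriv k g x| := by
    intro k hk x
    obtain ⟨B, hB⟩ := hbdd k hk
    exact le_ciSup (f := fun x => |iteratedDeriv k g x|) ⟨B, by rintro _ ⟨y, rfl⟩; exact hB y⟩ x
  have hM0 : ∀ k, 0 ≤ ⨆ x, |iteratedDeriv k g x| := fun k => Real.iSup_nonneg fun _ => abs_nonneg _
  have h0 : ∀ x, |g x| ≤ ⨆ x, |iteratedDeriv 0 g x| := by
    simpa only [iteratedDeriv_zero] using hM 0 (by norm_num)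
  have hf := hasTaylor_smoothMax hd hκ hg h0 (hM 1 (by norm_num)) (hM 2 (by norm_num))
    (hM 3 le_rfl)
  have n1 := hM0 1
  have n2 := hM0 2
  have n3 := hM0 3
  set M1 := ⨆ x, |iteratedDeriv 1 g x|
  set M2 := ⨆ x, |iteratedDeriv 2 g x|
  set M3 := ⨆ x, |iteratedDeriv 3 g x|
  have hA : 0 ≤ M2 + κ * M1 := by positivity
  have hE : 0 ≤ M3 + κ * M2 + κ ^ 2 * M1 := by positivity
  have key := lindeberg_bound hd hf (by positivity) hF hF0 hXF hmart hX3 hV hT hchar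
  have hS : ∀ᵐ ω ∂μ, ∀ i ∈ Finset.Icc 1 n, ∀ j k,
      Sigm i ω j k = (μ[fun ω => X i ω j * X i ω k | F 0]) ω :=
    (Finset.eventually_all _).2 fun i hi => ae_all_iff.2 fun j => ae_all_iff.2 fun k =>
      hSigm i hi j k
  have hβ : ∀ᵐ ω ∂μ, ∀ i ∈ Finset.Icc 1 n,
      (μ[fun ω' => ∑ j, ∑ k, |(μ[fun ω'' => X i ω'' j * X i ω'' k | F (i - 1)]) ω' -
        Sigm i ω' j k| | F 0]) ω =
      (μ[fun ω' => ∑ j, ∑ k, |(μ[fun ω'' => X i ω'' j * X i ω'' k | F (i - 1)]) ω' -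
        (μ[fun ω'' => X i ω'' j * X i ω'' k | F 0]) ω'| | F 0]) ω :=
    (Finset.eventually_all _).2 fun i hi => condExp_congr_ae <| by
      filter_upwards [hS] with ω hω
      simp only [hω i hi]
  have hβ0 : ∀ᵐ ω ∂μ, ∀ i ∈ Finset.Icc 1 n,
      0 ≤ (μ[fun ω' => ∑ j, ∑ k, |(μ[fun ω'' => X i ω'' j * X i ω'' k | F (i - 1)]) ω' -
        Sigm i ω' j k| | F 0]) ω :=
    (Finset.eventually_all _).2 fun i _ => condExp_nonneg <| ae_of_all _ fun ω =>
      Finset.sum_nonneg fun _ _ => Finset.sum_nonneg fun _ _ => abs_nonneg _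
  have hγ0 : ∀ᵐ ω ∂μ, ∀ i ∈ Finset.Icc 1 n, 0 ≤ (μ[fun ω' => ‖X i ω'‖ ^ 3 | F 0]) ω :=
    (Finset.eventually_all _).2 fun i _ => condExp_nonneg <| ae_of_all _ fun ω => by
      simp only [Pi.zero_apply]; positivity
  filter_upwards [key, hS, hβ, hβ0, hγ0] with ω key hS hβ hβ0 hγ0
  refine key.trans ?_
  rw [Finset.mul_sum, Finset.mul_sum, ← Finset.sum_add_distrib, Finset.mul_sum]
  refine Finset.sum_le_sum fun i hi => ?_
  simp only [← hβ i hi, ← hS i hi]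
  have p1 := mul_nonneg hA (hβ0 i hi)
  have p2 := mul_nonneg hE (hγ0 i hi)
  rw [mul_add (M3 + κ * M2 + κ ^ 2 * M1)]
  linarith
end
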